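/- Let A ⊆ ℝ^m be a set with 0 < |A| < +∞ (Lebesgue measure). If H^{m-1}(∂A \ ext_* A) < +∞, then there exists a sequence of smooth sets V_n ⊂⊂ A such that χ_{V_n} → χ_A in L_1(ℝ^m) and sup_n P(V_n) < +∞. -/

import Mathlib

open MeasureTheory Filter Topology Metric Set
open scoped ENNReal RealInnerProductSpace symmDiff

noncomputable section

abbrev Euc (m : ℕ) := EuclideanSpace ℝ (Fin m)

/-- Pointwise divergence of a vector field on `ℝ^m`. -/
def pdiv {m : ℕ} (φ : Euc m → Euc m) (x : Euc m) : ℝ :=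
  ∑ i, ⟪fderiv ℝ φ x (EuclideanSpace.single i 1), EuclideanSpace.single i (1 : ℝ)⟫

/-- The measure-theoretic exterior of `A`: points of Lebesgue density zero. -/
def extMeas {m : ℕ} (A : Set (Euc m)) : Set (Euc m) :=
  {x | Tendsto (fun r : ℝ => volume (A ∩ closedBall x r) / volume (closedBall x r))
      (𝓝[>] (0 : ℝ)) (𝓝 0)}

/-- The perimeter `P(V; W)` of `V` relative to the open set `W` (valued in `ℝ≥0∞`). -/
def perimeter {m : ℕ} (V W : Set (Euc m)) : ℝ≥0∞ :=
  ⨆ (φ : Euc m → Euc m) (_ : ContDiff ℝ 1 φ) (_ : HasCompactSupport φ)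
    (_ : tsupport φ ⊆ W) (_ : ∀ x, ‖φ x‖ ≤ 1),
    ENNReal.ofReal (∫ x in V, pdiv φ x)

/-- A smooth set: a bounded open set with `C^∞` boundary. -/
def IsSmoothSet {m : ℕ} (V : Set (Euc m)) : Prop :=
  IsOpen V ∧ Bornology.IsBounded V ∧
  ∀ x ∈ frontier V, ∃ (W : Set (Euc m)) (f : Euc m → ℝ), IsOpen W ∧ x ∈ W ∧
    ContDiff ℝ (⊤ : ℕ∞) f ∧ (∀ y ∈ W, fderiv ℝ f y ≠ 0) ∧ V ∩ W = {y | f y < 0} ∩ W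

lemma perimeter_le_of_shift {m : ℕ} {V : Set (Euc m)} (hV : MeasurableSet V)
    (hfin : volume V ≠ ⊤) {s : ℕ → ℝ} (hs : ∀ n, 0 < s n) (hs0 : Tendsto s atTop (𝓝 0))
    {L : ℝ≥0∞} (hL : ∃ᶠ n in atTop,
      ∑ i, volume (V ∆ ((fun x => x + s n • EuclideanSpace.single i (1:ℝ)) ⁻¹' V))
        ≤ L * ENNReal.ofReal (s n)) :
    perimeter V univ ≤ L := by
  by_cases hLt : L = ⊤
  · simp [hLt]
  unfold perimeter
  refine iSup_le fun φ => iSup_le fun hφ => iSup_le fun hc => iSup_le fun _ => iSup_le fun hb => ?_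
  refine ENNReal.ofReal_le_of_le_toReal ?_
  obtain ⟨K, hK⟩ := hφ.lipschitzWith_of_hasCompactSupport hc (by simp)
  have hφd : Differentiable ℝ φ := hφ.differentiable (by simp)
  have hφc : Continuous φ := hφ.continuous
  let e : Fin m → Euc m := fun i => EuclideanSpace.single i (1:ℝ)
  have he : ∀ i, ‖e i‖ = 1 := fun i => by simp [e]
  have hcoord : ∀ (x : Euc m) i, |x i| ≤ ‖x‖ := fun x i => by
    simpa using PiLp.norm_apply_le x i
  have : IsFiniteMeasure (volume.restrict V) := ⟨by simpa using hfin.lt_top⟩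
  have hcont : ∀ i (c : ℝ), Continuous (fun x => φ (x - c • e i) i) := fun i c => by
    have : Continuous (fun x => φ (x - c • e i)) := hφc.comp (by fun_prop)
    fun_prop
  have hcont0 : ∀ i, Continuous (fun x => φ x i) := fun i => by fun_prop
  have hIntg : ∀ i (W : Set (Euc m)), volume W ≠ ⊤ → ∀ c : ℝ,
      IntegrableOn (fun x => φ (x - c • e i) i) W := fun i W hW c => by
    have : IsFiniteMeasure (volume.restrict W) := ⟨by simpa using hW.lt_top⟩
    refine Integrable.of_bound (hcont i c).aestronglyMeasurable 1 (Eventually.of_forall fun x => ?_)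
    exact (hcoord _ _).trans (hb _)
  have hIntg0 : ∀ i (W : Set (Euc m)), volume W ≠ ⊤ →
      IntegrableOn (fun x => φ x i) W := fun i W hW => by
    simpa using hIntg i W hW 0
  have hlim : ∀ i, Tendsto (fun n => ∫ x in V, (φ x i - φ (x - s n • e i) i) / s n) atTop
      (𝓝 (∫ x in V, (fderiv ℝ φ x (e i)) i)) := by
    intro i
    refine tendsto_integral_of_dominated_convergence (fun _ => (K:ℝ)) ?_ (integrable_const _) ?_ ?_
    · intro n
      exact (((hcont0 i).sub (hcont i (s n))).div_const _).aestronglyMeasurable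
    · intro n
      refine Eventually.of_forall fun x => ?_
      rw [norm_div, div_le_iff₀ (by simpa using (hs n).ne'), Real.norm_eq_abs]
      have h1 := hK.dist_le_mul x (x - s n • e i)
      rw [dist_eq_norm, dist_eq_norm] at h1
      have h2 := hcoord (φ x - φ (x - s n • e i)) i
      have h3 : x - (x - s n • e i) = s n • e i := by abel
      rw [h3, norm_smul, he, mul_one] at h1
      exact le_trans (by simpa using h2) h1
    · refine Eventually.of_forall fun x => ?_
      have h1 : HasDerivAt (fun t : ℝ => φ (x + t • (- e i)) i) ((fderiv ℝ φ x (-e i)) i) 0 := by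
        have h2 : HasFDerivAt φ (fderiv ℝ φ x) (x + (0:ℝ) • (- e i)) := by
          simpa using (hφd x).hasFDerivAt
        have h3 : HasDerivAt (fun t : ℝ => x + t • (- e i)) (- e i) 0 := by
          simpa using ((hasDerivAt_id (0:ℝ)).smul_const (- e i)).const_add x
        have h4 := h2.comp_hasDerivAt (0:ℝ) h3
        exact ((EuclideanSpace.proj i : Euc m →L[ℝ] ℝ).hasFDerivAt.comp_hasDerivAt (0:ℝ) h4)
      rw [hasDerivAt_iff_tendsto_slope_zero] at h1
      have h2 : Tendsto s atTop (𝓝[≠] 0) :=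
        tendsto_nhdsWithin_iff.2 ⟨hs0, Eventually.of_forall fun n => (hs n).ne'⟩
      have h3 := (h1.comp h2).neg
      simp only [map_neg, PiLp.neg_apply, neg_neg] at h3
      refine h3.congr fun n => ?_
      simp only [Function.comp, zero_add, zero_smul, smul_eq_mul, smul_neg, ← sub_eq_add_neg, sub_zero]
      ring
  have hsum := tendsto_finsetSum (Finset.univ : Finset (Fin m)) (fun i _ => hlim i)
  have hpd : ∫ x in V, pdiv φ x = ∑ i, ∫ x in V, (fderiv ℝ φ x (e i)) i := by
    rw [← integral_finsetSum]
    · refine integral_congr_ae (Eventually.of_forall fun x => ?_)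
      simp [pdiv, e, EuclideanSpace.inner_single_right]
    · intro i _
      refine Integrable.of_bound (C := K) ?_ (Eventually.of_forall fun x => ?_)
      · have : Continuous (fun x => fderiv ℝ φ x (e i)) :=
          (hφ.continuous_fderiv (by simp)).clm_apply continuous_const
        exact (by fun_prop : Continuous (fun x => (fderiv ℝ φ x (e i)) i)).aestronglyMeasurable
      · refine (hcoord _ _).trans ?_
        refine ((fderiv ℝ φ x).le_opNorm _).trans ?_
        rw [he, mul_one]
        exact norm_fderiv_le_of_lipschitz ℝ hK
  rw [hpd]
  refine le_of_tendsto_of_frequently hsum (hL.mono fun n hn => ?_)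
  have key : ∀ i, ∫ x in V, (φ x i - φ (x - s n • e i) i) / s n ≤
      (volume (V ∆ ((fun x => x + s n • e i) ⁻¹' V))).toReal / s n := by
    intro i
    rw [integral_div]
    refine div_le_div_of_nonneg_right ?_ (hs n).le
    set W := (fun x => x + s n • e i) ⁻¹' V with hW
    have hWm : MeasurableSet W := (measurable_add_const _) hV
    have hmp : MeasurePreserving (fun x : Euc m => x + s n • e i) volume volume :=
      measurePreserving_add_right _ _
    have hWv : volume W = volume V := hmp.measure_preimage hV.nullMeasurableSet
    have hWf : volume W ≠ ⊤ := hWv ▸ hfin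
    have h1 : ∫ x in V, φ (x - s n • e i) i = ∫ x in W, φ x i := by
      have := hmp.setIntegral_preimage_emb (measurableEmbedding_addRight _)
        (fun x => φ (x - s n • e i) i) V
      rw [← this]
      simp [hW]
    rw [integral_sub (hIntg0 i V hfin) (hIntg i V hfin _), h1]
    have h2 := integral_inter_add_sdiff hWm (hIntg0 i V hfin)
    have h3 := integral_inter_add_sdiff hV (hIntg0 i W hWf)
    rw [inter_comm] at h3
    have hle : ∀ S : Set (Euc m), volume S ≠ ⊤ → |∫ x in S, φ x i| ≤ (volume S).toReal := by
      intro S hS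
      have := norm_setIntegral_le_of_norm_le_const (μ := volume) (s := S) (C := 1)
        (f := fun x => φ x i) hS.lt_top (fun x _ => (hcoord _ _).trans (hb _))
      simpa [Measure.real] using this
    have hf1 : volume (V \ W) ≠ ⊤ := measure_ne_top_of_subset sdiff_subset hfin
    have hf2 : volume (W \ V) ≠ ⊤ := measure_ne_top_of_subset sdiff_subset hWf
    have h4 := hle (V \ W) hf1
    have h5 := hle (W \ V) hf2
    have h6 : volume (V ∆ W) = volume (V \ W) + volume (W \ V) :=
      measure_symmDiff_eq hV.nullMeasurableSet hWm.nullMeasurableSet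
    rw [h6, ENNReal.toReal_add hf1 hf2]
    rw [abs_le] at h4 h5
    linarith
  refine (Finset.sum_le_sum fun i _ => key i).trans ?_
  rw [← Finset.sum_div, div_le_iff₀ (hs n), ← ENNReal.toReal_sum]
  · have := ENNReal.toReal_mono (by finiteness) hn
    rwa [ENNReal.toReal_mul, ENNReal.toReal_ofReal (hs n).le] at this
  · intro i _
    have hmp : MeasurePreserving (fun x : Euc m => x + s n • e i) volume volume :=
      measurePreserving_add_right _ _
    have hWv : volume ((fun x => x + s n • e i) ⁻¹' V) = volume V :=
      hmp.measure_preimage hV.nullMeasurableSet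
    refine measure_ne_top_of_subset (symmDiff_subset_union) ?_
    refine ((measure_union_le _ _).trans_lt ?_).ne
    rw [hWv]
    exact ENNReal.add_lt_top.2 ⟨hfin.lt_top, hfin.lt_top⟩

lemma exists_morse {m : ℕ} {u : Euc m → ℝ} (hu : ContDiff ℝ (⊤ : ℕ∞) u) {ε : ℝ} (hε : 0 < ε) :
    ∃ a : Euc m, ‖a‖ < ε ∧ {x | fderiv ℝ u x + innerSL ℝ a = 0}.Countable := by
  let T := (InnerProductSpace.toDual ℝ (Euc m)).symm
  let G : Euc m → Euc m := fun x => T (fderiv ℝ u x)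
  have hG : ContDiff ℝ 1 G := by
    have h1 : ContDiff ℝ 1 (fderiv ℝ u) := hu.fderiv_right (by
      norm_num
      exact WithTop.coe_le_coe.2 le_top)
    exact (T.toContinuousLinearEquiv : (StrongDual ℝ (Euc m)) ≃L[ℝ] Euc m).contDiff.comp h1
  have hGd : Differentiable ℝ G := hG.differentiable (by simp)
  let S : Set (Euc m) := {x | (fderiv ℝ G x).det = 0}
  have hS : volume (G '' S) = 0 :=
    addHaar_image_eq_zero_of_det_fderivWithin_eq_zero volume
      (fun x _ => (hGd x).hasFDerivAt.hasFDerivWithinAt) (fun x hx => hx)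
  have : ∃ b ∈ ball (0 : Euc m) ε, b ∉ G '' S := by
    by_contra! hcon
    have h1 : volume (ball (0 : Euc m) ε) ≤ volume (G '' S) := measure_mono hcon
    exact (measure_ball_pos volume (0 : Euc m) hε).ne' (le_antisymm (h1.trans hS.le) bot_le)
  obtain ⟨b, hb, hbS⟩ := this
  refine ⟨-b, by simpa using hb, ?_⟩
  have hZ : {x | fderiv ℝ u x + innerSL ℝ (-b) = 0} = {x | G x = b} := by
    ext x
    simp only [mem_ofPred_eq, map_neg, add_neg_eq_zero, G]
    rw [LinearIsometryEquiv.symm_apply_eq]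
    constructor
    · intro h
      rw [h]; ext; simp
    · intro h
      rw [h]; ext; simp
  rw [hZ]
  have hd : DiscreteTopology {x | G x = b} := by
    rw [discreteTopology_subtype_iff]
    intro x hx
    have hdet : (fderiv ℝ G x).det ≠ 0 := fun h => hbS ⟨x, h, hx⟩
    have hanti : ∃ C, AntilipschitzWith C (fderiv ℝ G x) := by
      let e := ContinuousLinearMap.toContinuousLinearEquivOfDetNeZero (fderiv ℝ G x) hdet
      refine ⟨_, e.antilipschitz⟩
    have := (hGd x).hasFDerivAt.eventually_ne hanti (c := b)
    rw [← disjoint_iff, disjoint_principal_right]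
    exact this
  exact (TopologicalSpace.separableSpace_iff_countable (α := {x | G x = b})).1 inferInstance

lemma exists_level {m : ℕ} {u : Euc m → ℝ} (hu : ContDiff ℝ (⊤ : ℕ∞) u)
    (hc : HasCompactSupport u) {C : ℝ≥0∞} (hC : C ≠ ⊤) {h0 : ℝ} (hh0 : 0 < h0)
    (hT : ∀ h : Euc m, ‖h‖ < h0 → ∫⁻ x, ‖u (x + h) - u x‖ₑ ≤ C * ‖h‖ₑ) :
    ∃ V : Set (Euc m), IsSmoothSet V ∧ closure V ⊆ tsupport u ∧ IsCompact (closure V) ∧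
      perimeter V univ ≤ 3 * (m * (C + 1)) + 1 ∧ {x | 5 / 6 < u x} ⊆ V := by
  obtain ⟨R, hR1, hR⟩ : ∃ R : ℝ, 1 ≤ R ∧ tsupport u ⊆ ball 0 (R - 1) := by
    obtain ⟨R, hR⟩ := hc.isCompact.isBounded.subset_ball (0 : Euc m)
    refine ⟨max R 0 + 1, by simp, hR.trans (ball_subset_ball (by simp))⟩
  set β := (volume (ball (0 : Euc m) (R + 1))).toReal with hβ
  have hβ0 : 0 ≤ β := ENNReal.toReal_nonneg
  have hε : 0 < 1 / (6 * R + β) := by positivity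
  obtain ⟨a, ha, hcount⟩ := exists_morse hu hε
  have ha0 := norm_nonneg a
  have haR : ‖a‖ * R ≤ 1 / 6 := by
    rw [lt_div_iff₀ (by positivity)] at ha
    nlinarith
  have haβ : ‖a‖ * β ≤ 1 := by
    rw [lt_div_iff₀ (by positivity)] at ha
    nlinarith
  let w : Euc m → ℝ := fun x => u x + ⟪a, x⟫
  have hw : ContDiff ℝ (⊤ : ℕ∞) w := hu.add (contDiff_const.inner ℝ contDiff_id)
  have hwc : Continuous w := hw.continuous
  have hwd : ∀ x, fderiv ℝ w x = fderiv ℝ u x + innerSL ℝ a := by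
    intro x
    have h1 : HasFDerivAt u (fderiv ℝ u x) x :=
      ((hu.differentiable (by simp)) x).hasFDerivAt
    exact (h1.add (innerSL ℝ a).hasFDerivAt).fderiv
  let V : ℝ → Set (Euc m) := fun t => {x | x ∈ ball (0 : Euc m) R ∧ t < w x}
  have hVo : ∀ t, IsOpen (V t) := fun t =>
    isOpen_ball.inter (isOpen_lt continuous_const hwc)
  have hinner : ∀ x ∈ ball (0 : Euc m) R, |⟪a, x⟫| ≤ 1 / 6 := by
    intro x hx
    have h1 := abs_real_inner_le_norm a x
    have h2 : ‖x‖ < R := by simpa using hx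
    nlinarith [norm_nonneg x]
  have hVt : ∀ t, 1 / 3 < t → V t ⊆ {x | 1 / 6 ≤ u x} := by
    intro t ht x hx
    have h1 := abs_le.1 (hinner x hx.1)
    have h2 : t < u x + ⟪a, x⟫ := hx.2
    simp only [mem_ofPred_eq]
    linarith
  have hsub : {x | 1 / 6 ≤ u x} ⊆ tsupport u := by
    intro x hx
    apply subset_tsupport u
    simp only [mem_ofPred_eq] at hx
    simp only [Function.mem_support]
    linarith
  have hVcl : ∀ t, 1 / 3 < t → closure (V t) ⊆ tsupport u := fun t ht =>
    closure_minimal ((hVt t ht).trans hsub) (isClosed_tsupport u)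
  have hVcomp : ∀ t, 1 / 3 < t → IsCompact (closure (V t)) := fun t ht =>
    hc.isCompact.of_isClosed_subset isClosed_closure (hVcl t ht)
  -- the level estimate
  let s : ℕ → ℝ := fun n => (min h0 1) / (n + 2)
  have hmin : 0 < min h0 1 := by positivity
  have hs : ∀ n, 0 < s n := fun n => by positivity
  have hslt : ∀ n, s n < min h0 1 := fun n => by
    have : (0:ℝ) ≤ n := Nat.cast_nonneg n
    rw [div_lt_iff₀ (by positivity)]; nlinarith
  have hs0 : Tendsto s atTop (𝓝 0) := by
    refine tendsto_const_nhds.div_atTop ?_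
    exact tendsto_atTop_add_const_right _ _ tendsto_natCast_atTop_atTop
  let e : Fin m → Euc m := fun i => EuclideanSpace.single i (1:ℝ)
  have he : ∀ i, ‖e i‖ = 1 := fun i => by simp [e]
  let D : ℕ → Fin m → Set (ℝ × Euc m) := fun n i =>
    {p | p.2 ∈ V p.1} ∆ {p | p.2 + s n • e i ∈ V p.1}
  have hDm : ∀ n i, MeasurableSet (D n i) := by
    intro n i
    have hm1 : MeasurableSet {p : ℝ × Euc m | p.2 ∈ V p.1} := by
      have : IsOpen {p : ℝ × Euc m | p.2 ∈ V p.1} :=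
        (isOpen_ball.preimage continuous_snd).inter
          (isOpen_lt continuous_fst (hwc.comp continuous_snd))
      exact this.measurableSet
    refine hm1.symmDiff ?_
    have hc2 : Continuous (fun p : ℝ × Euc m => (p.1, p.2 + s n • e i)) := by fun_prop
    exact hc2.measurable hm1
  let q : ℕ → ℝ → ℝ≥0∞ := fun n t =>
    (∑ i, volume (V t ∆ ((fun x => x + s n • e i) ⁻¹' V t))) / ENNReal.ofReal (s n)
  have hqeq : ∀ n t i, volume (V t ∆ ((fun x => x + s n • e i) ⁻¹' V t)) =
      volume (Prod.mk t ⁻¹' (D n i)) := fun n t i => rfl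
  have hqm : ∀ n, Measurable (q n) := by
    intro n
    refine Measurable.div_const ?_ _
    refine Finset.measurable_sum _ fun i _ => ?_
    exact measurable_measure_prodMk_left (hDm n i)
  have hqint1 : ∀ n i, ∫⁻ t in Ioo (1/3 : ℝ) (2/3), volume (Prod.mk t ⁻¹' (D n i)) ≤
      (C + 1) * ENNReal.ofReal (s n) := by
    intro n i
    have hnorm : ‖s n • e i‖ = s n := by rw [norm_smul, he, mul_one, Real.norm_of_nonneg (hs n).le]
    have hs1 : s n < 1 := (hslt n).trans_le (min_le_right _ _)
    rw [← Measure.prod_apply (hDm n i), Measure.prod_apply_symm (hDm n i)]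
    have hpt : ∀ x : Euc m, (volume.restrict (Ioo (1/3 : ℝ) (2/3))) ((fun t => (t, x)) ⁻¹' (D n i))
        ≤ ‖u (x + s n • e i) - u x‖ₑ +
          (ball (0 : Euc m) (R + 1)).indicator (fun _ => ENNReal.ofReal (‖a‖ * s n)) x := by
      intro x
      rw [Measure.restrict_apply' measurableSet_Ioo]
      have hin : |⟪a, s n • e i⟫| ≤ ‖a‖ * s n := by
        have := abs_real_inner_le_norm a (s n • e i)
        rwa [hnorm] at this
      by_cases hx : x ∈ ball (0 : Euc m) R ∧ x + s n • e i ∈ ball (0 : Euc m) R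
      · have hx1 : x ∈ ball (0 : Euc m) (R + 1) := ball_subset_ball (by linarith) hx.1
        rw [indicator_of_mem hx1]
        have hsub2 : (fun t => (t, x)) ⁻¹' (D n i) ∩ Ioo (1/3 : ℝ) (2/3) ⊆
            uIcc (w x) (w (x + s n • e i)) := by
          rintro t ⟨ht, -⟩
          rw [mem_uIcc]
          rcases ht with ⟨h1, h2⟩ | ⟨h1, h2⟩
          · right
            refine ⟨?_, h1.2.le⟩
            by_contra! hlt
            exact h2 ⟨hx.2, hlt⟩
          · left
            refine ⟨?_, h1.2.le⟩
            by_contra! hlt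
            exact h2 ⟨hx.1, hlt⟩
        refine (measure_mono hsub2).trans ?_
        rw [Real.volume_interval, ← ofReal_norm, Real.norm_eq_abs,
          ← ENNReal.ofReal_add (abs_nonneg _) (by positivity)]
        refine ENNReal.ofReal_le_ofReal ?_
        have h5 : w (x + s n • e i) - w x = (u (x + s n • e i) - u x) + ⟪a, s n • e i⟫ := by
          simp only [w, inner_add_right]; ring
        rw [h5]
        exact (abs_add_le _ _).trans (by linarith)
      · have hempty : (fun t => (t, x)) ⁻¹' (D n i) ∩ Ioo (1/3 : ℝ) (2/3) = ∅ := by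
          rw [eq_empty_iff_forall_notMem]
          rintro t ⟨ht, ht3, -⟩
          have hball : ∀ y ∈ V t, ‖y‖ < R - 1 := fun y hy => by
            simpa using hR (hsub (hVt t ht3 hy))
          have htri1 := norm_add_le x (s n • e i)
          have htri2 := norm_sub_le (x + s n • e i) (s n • e i)
          rw [add_sub_cancel_right] at htri2
          rw [hnorm] at htri1 htri2
          apply hx
          simp only [mem_ball_zero_iff]
          rcases ht with ⟨h1, h2⟩ | ⟨h1, h2⟩
          · have := hball _ h1
            constructor <;> linarith
          · have := hball _ h1
            constructor <;> linarith
        rw [hempty]; simp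
    refine (lintegral_mono hpt).trans ?_
    rw [lintegral_add_right _ (measurable_const.indicator measurableSet_ball), add_mul]
    refine add_le_add ?_ ?_
    · refine (hT _ ?_).trans ?_
      · rw [hnorm]; exact (hslt n).trans_le (min_le_left _ _)
      · rw [← ofReal_norm, hnorm]
    · rw [lintegral_indicator_const measurableSet_ball, mul_comm ‖a‖, one_mul,
        ENNReal.ofReal_mul (hs n).le, mul_assoc]
      have : ENNReal.ofReal ‖a‖ * volume (ball (0 : Euc m) (R + 1)) ≤ 1 := by
        rw [← ENNReal.ofReal_toReal (measure_ball_lt_top (μ := volume) (x := (0 : Euc m)) (r := R + 1)).ne,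
          ← ENNReal.ofReal_mul ha0]
        exact ENNReal.ofReal_le_one.2 haβ
      exact (mul_le_mul_right this _).trans (by simp)
  have hqint : ∀ n, ∫⁻ t in Ioo (1/3 : ℝ) (2/3), q n t ≤ m * (C + 1) := by
    intro n
    have hsp : ENNReal.ofReal (s n) ≠ 0 := by simpa using hs n
    have hq' : q n = fun t => (∑ i, volume (Prod.mk t ⁻¹' (D n i))) * (ENNReal.ofReal (s n))⁻¹ := rfl
    rw [hq', lintegral_mul_const _ (Finset.measurable_sum _ fun i _ =>
      measurable_measure_prodMk_left (hDm n i)), lintegral_finsetSum _ (fun i _ =>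
      measurable_measure_prodMk_left (hDm n i)), ← div_eq_mul_inv]
    refine ENNReal.div_le_of_le_mul ?_
    refine (Finset.sum_le_sum fun i _ => hqint1 n i).trans ?_
    simp [mul_assoc]
  have hlim : ∫⁻ t in Ioo (1/3 : ℝ) (2/3), liminf (fun n => q n t) atTop ≤ m * (C + 1) := by
    refine (lintegral_liminf_le hqm).trans ?_
    refine liminf_le_of_le ?_ ?_
    · isBoundedDefault
    · intro b hb
      obtain ⟨n, hn⟩ := hb.exists
      exact hn.trans (hqint n)
  -- choose the level
  let Z := w '' {x | fderiv ℝ u x + innerSL ℝ a = 0}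
  have hZ : volume Z = 0 := (hcount.image w).measure_zero _
  have hvol : volume (Ioo (1/3 : ℝ) (2/3)) = ENNReal.ofReal (1/3) := by
    rw [Real.volume_Ioo]; norm_num
  have hmu : volume.restrict (Ioo (1/3 : ℝ) (2/3)) ≠ 0 := by
    rw [Ne, Measure.restrict_eq_zero, hvol]; simp
  obtain ⟨t, htN, htle⟩ := exists_notMem_null_le_laverage hmu
    (f := fun t => liminf (fun n => q n t) atTop) (Measurable.liminf hqm).aemeasurable
    (N := Z ∪ (Ioo (1/3 : ℝ) (2/3))ᶜ) (by
      refine measure_union_null (Measure.restrict_apply_le _ _ |>.trans hZ.le |> le_antisymm <| bot_le) ?_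
      rw [Measure.restrict_apply measurableSet_Ioo.compl]; simp)
  simp only [mem_union, not_or, notMem_compl_iff] at htN
  obtain ⟨htZ, ht1, ht2⟩ := htN
  have htle' : liminf (fun n => q n t) atTop ≤ 3 * (m * (C + 1)) := by
    refine htle.trans ?_
    rw [laverage_eq, Measure.restrict_apply_univ, hvol]
    refine ENNReal.div_le_of_le_mul ?_
    refine hlim.trans ?_
    rw [mul_comm (3 : ℝ≥0∞), mul_assoc]
    have : (3 : ℝ≥0∞) * ENNReal.ofReal (1/3) = 1 := by
      rw [show (3 : ℝ≥0∞) = ENNReal.ofReal 3 by simp, ← ENNReal.ofReal_mul (by norm_num)]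
      norm_num
    rw [this, mul_one]
  have hbt : (3 * (m * (C + 1)) : ℝ≥0∞) ≠ ⊤ := by finiteness
  have hfreq : ∃ᶠ n in atTop, q n t < 3 * (m * (C + 1)) + 1 := by
    refine frequently_lt_of_liminf_lt (by isBoundedDefault) ?_
    exact htle'.trans_lt (ENNReal.lt_add_right hbt one_ne_zero)
  refine ⟨V t, ⟨hVo t, (hVcomp t ht1).isBounded.subset subset_closure, ?_⟩, hVcl t ht1,
    hVcomp t ht1, ?_, ?_⟩
  · intro x hx
    have hxR : x ∈ ball (0 : Euc m) R :=
      ball_subset_ball (by linarith) (hR (hVcl t ht1 (frontier_subset_closure hx)))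
    have hwx : w x = t := by
      apply le_antisymm
      · by_contra! hlt
        have : x ∈ V t := ⟨hxR, hlt⟩
        rw [(hVo t).frontier_eq] at hx
        exact hx.2 this
      · have : closure (V t) ⊆ {y | t ≤ w y} :=
          closure_minimal (fun y hy => hy.2.le) (isClosed_le continuous_const hwc)
        exact this (frontier_subset_closure hx)
    have hfd : Continuous (fderiv ℝ w) := hw.continuous_fderiv (by simp)
    refine ⟨ball 0 R ∩ {y | fderiv ℝ w y ≠ 0}, fun y => t - w y,
      isOpen_ball.inter (isOpen_ne_fun hfd continuous_const), ⟨hxR, ?_⟩, contDiff_const.sub hw,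
      ?_, ?_⟩
    · intro h0
      apply htZ
      refine ⟨x, ?_, hwx⟩
      rw [mem_ofPred_eq, ← hwd]; exact h0
    · intro y hy
      rw [fderiv_const_sub]
      simpa using hy.2
    · ext y
      simp only [V, mem_inter_iff, mem_ofPred_eq, sub_neg]
      tauto
  · refine perimeter_le_of_shift (hVo t).measurableSet ?_ hs hs0 (hfreq.mono fun n hn => ?_)
    · exact measure_ne_top_of_subset subset_closure (hVcomp t ht1).measure_lt_top.ne
    · have := hn.le
      exact (ENNReal.div_le_iff (by simpa using hs n) (by simp)).1 this
  · intro x hx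
    simp only [mem_ofPred_eq] at hx
    have hxR : x ∈ ball (0 : Euc m) R := by
      refine ball_subset_ball (by linarith) (hR (hsub ?_))
      simp only [mem_ofPred_eq]; linarith
    refine ⟨hxR, ?_⟩
    have := (abs_le.1 (hinner x hxR)).1
    simp only [w]
    linarith

lemma lintegral_enorm_avg_le {m : ℕ} {ρ : Euc m → ℝ} (hρc : Continuous ρ)
    (hρ1 : ∫⁻ t, ‖ρ t‖ₑ = 1) {r : ℝ} (hρs : ∀ t, ρ t ≠ 0 → ‖t‖ < r)
    {G : Euc m → Euc m → ℝ} (hG : Measurable (Function.uncurry G)) {B : ℝ≥0∞}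
    (hB : ∀ t, ‖t‖ < r → ∫⁻ x, ‖G t x‖ₑ ≤ B) :
    ∫⁻ x, ‖∫ t, ρ t * G t x‖ₑ ≤ B := by
  calc ∫⁻ x, ‖∫ t, ρ t * G t x‖ₑ ≤ ∫⁻ x, ∫⁻ t, ‖ρ t‖ₑ * ‖G t x‖ₑ := by
        refine lintegral_mono fun x => (enorm_integral_le_lintegral_enorm _).trans ?_
        simp only [enorm_mul]; exact le_rfl
    _ = ∫⁻ t, ∫⁻ x, ‖ρ t‖ₑ * ‖G t x‖ₑ := by
        rw [lintegral_lintegral_swap]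
        refine Measurable.aemeasurable ?_
        have h1 : Measurable (fun p : Euc m × Euc m => G p.2 p.1) := hG.comp measurable_swap
        have h2 : Measurable (fun p : Euc m × Euc m => ρ p.2) := hρc.measurable.comp measurable_snd
        exact (h2.enorm.mul h1.enorm)
    _ ≤ ∫⁻ t, ‖ρ t‖ₑ * B := by
        refine lintegral_mono fun t => ?_
        have hm : Measurable (fun x => ‖G t x‖ₑ) :=
          (hG.comp (measurable_const.prodMk measurable_id)).enorm
        rw [lintegral_const_mul _ hm]
        by_cases h : ρ t = 0
        · simp [h]
        · exact mul_le_mul_right (hB t (hρs t h)) _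
    _ = B := by
        rw [lintegral_mul_const _ hρc.measurable.enorm, hρ1, one_mul]

lemma exists_mollify {m : ℕ} {v : Euc m → ℝ} (hv : Measurable v) (hv0 : ∀ x, 0 ≤ v x)
    (hv1 : ∀ x, v x ≤ 1) {S A : Set (Euc m)} (hS : IsCompact S) (hA : IsOpen A) (hSA : S ⊆ A)
    (hvS : ∀ x, v x ≠ 0 → x ∈ S) {C : ℝ≥0∞} (hC : C ≠ ⊤) {h0 : ℝ} (hh0 : 0 < h0)
    (hT : ∀ h : Euc m, ‖h‖ < h0 → ∫⁻ x, ‖v (x + h) - v x‖ₑ ≤ C * ‖h‖ₑ) {ε : ℝ≥0∞} (hε : 0 < ε) :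
    ∃ u : Euc m → ℝ, ContDiff ℝ (⊤ : ℕ∞) u ∧ HasCompactSupport u ∧ tsupport u ⊆ A ∧
      (∀ h : Euc m, ‖h‖ < h0 → ∫⁻ x, ‖u (x + h) - u x‖ₑ ≤ C * ‖h‖ₑ) ∧
      ∫⁻ x, ‖u x - v x‖ₑ ≤ ε := by
  obtain ⟨r1, hr1, hr1A⟩ := hS.exists_cthickening_subset_open hA hSA
  obtain ⟨r2, hr2, hr2ε⟩ : ∃ r2 : ℝ, 0 < r2 ∧ C * ENNReal.ofReal r2 ≤ ε := by
    have h1 : Tendsto (fun r : ℝ => C * ENNReal.ofReal r) (𝓝[>] 0) (𝓝 0) := by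
      have h2 : Tendsto (fun r : ℝ => C * ENNReal.ofReal r) (𝓝 0) (𝓝 (C * ENNReal.ofReal 0)) :=
        ENNReal.Tendsto.const_mul (ENNReal.continuous_ofReal.tendsto 0) (Or.inr hC)
      simp only [ENNReal.ofReal_zero, mul_zero] at h2
      exact h2.mono_left nhdsWithin_le_nhds
    have h3 := ((ENNReal.tendsto_nhds_zero.1 h1) ε hε).and self_mem_nhdsWithin
    obtain ⟨r, hr⟩ := h3.exists
    exact ⟨r, hr.2, hr.1⟩
  set r := min r1 (min r2 h0) with hr
  have hrpos : 0 < r := by positivity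
  let φ : ContDiffBump (0 : Euc m) := ⟨r / 2, r, by positivity, by linarith⟩
  let ρ : Euc m → ℝ := φ.normed volume
  have hρc : Continuous ρ := φ.continuous_normed
  have hρ0 : ∀ t, 0 ≤ ρ t := fun t => φ.nonneg_normed t
  have hρs : ∀ t, ρ t ≠ 0 → ‖t‖ < r := by
    intro t ht
    have : t ∈ Function.support (φ.normed volume) := ht
    rw [φ.support_normed_eq] at this
    simpa using this
  have hρ1 : ∫⁻ t, ‖ρ t‖ₑ = 1 := by
    have h1 : ∀ t, ‖ρ t‖ₑ = ENNReal.ofReal (ρ t) := fun t => Real.enorm_of_nonneg (hρ0 t)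
    simp_rw [h1]
    rw [← ofReal_integral_eq_lintegral_ofReal φ.integrable_normed (Eventually.of_forall hρ0),
      φ.integral_normed]
    simp
  have hvb : ∀ x, ‖v x‖ ≤ 1 := fun x => by
    rw [Real.norm_of_nonneg (hv0 x)]; exact hv1 x
  have hρint : Integrable ρ := φ.integrable_normed
  have hIntg : ∀ (f : Euc m → ℝ), Measurable f → (∀ x, ‖f x‖ ≤ 1) →
      Integrable (fun t => ρ t * f t) := fun f hf hfb =>
    hρint.mul_bdd hf.aestronglyMeasurable (Eventually.of_forall hfb)
  have hvloc : LocallyIntegrable v := by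
    intro x
    refine ⟨ball x 1, ball_mem_nhds x one_pos, ?_⟩
    have : IsFiniteMeasure (volume.restrict (ball x 1)) := ⟨by simpa using measure_ball_lt_top⟩
    exact Integrable.of_bound hv.aestronglyMeasurable 1 (Eventually.of_forall hvb)
  let u : Euc m → ℝ := fun x => ∫ t, ρ t * v (x - t)
  have hu : u = convolution ρ v (ContinuousLinearMap.lsmul ℝ ℝ) volume := by
    ext x; simp [u, convolution]
  have hρcs : HasCompactSupport ρ := φ.hasCompactSupport_normed
  have husupp : Function.support u ⊆ cthickening r S := by
    intro x hx
    by_contra hcon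
    apply hx
    simp only [u]
    have : ∀ t, ρ t * v (x - t) = 0 := by
      intro t
      by_contra hne
      have h1 := left_ne_zero_of_mul hne
      have h2 := hvS _ (right_ne_zero_of_mul hne)
      apply hcon
      refine mem_cthickening_of_dist_le x (x - t) r S h2 ?_
      rw [dist_eq_norm]
      simpa using (hρs t h1).le
    simp [this]
  have hut : tsupport u ⊆ cthickening r S := closure_minimal husupp isClosed_cthickening
  refine ⟨u, ?_, ?_, ?_, ?_, ?_⟩
  · rw [hu]
    exact hρcs.contDiff_convolution_left _ φ.contDiff_normed hvloc
  · exact hS.cthickening.of_isClosed_subset (isClosed_tsupport u) hut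
  · exact hut.trans ((cthickening_mono (min_le_left _ _) _).trans hr1A)
  · intro h hh
    have h1 : ∀ x, u (x + h) - u x = ∫ t, ρ t * (v (x - t + h) - v (x - t)) := by
      intro x
      simp only [u]
      rw [← integral_sub]
      · refine integral_congr_ae (Eventually.of_forall fun t => ?_)
        simp only [mul_sub, add_sub_right_comm]
      · exact hIntg (fun t => v (x + h - t)) (by fun_prop) (fun _ => hvb _)
      · exact hIntg (fun t => v (x - t)) (by fun_prop) (fun _ => hvb _)
    simp_rw [h1]
    refine lintegral_enorm_avg_le hρc hρ1 hρs (G := fun t x => v (x - t + h) - v (x - t)) ?_ ?_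
    · simp only [Function.uncurry_def]; fun_prop
    · intro t _
      rw [lintegral_sub_right_eq_self (fun x => ‖v (x + h) - v x‖ₑ) t]
      exact hT h hh
  · have h1 : ∀ x, u x - v x = ∫ t, ρ t * (v (x - t) - v x) := by
      intro x
      have h2 : v x = ∫ t, ρ t * v x := by
        rw [integral_mul_const, φ.integral_normed, one_mul]
      rw [h2]
      simp only [u]
      rw [← integral_sub]
      · refine integral_congr_ae (Eventually.of_forall fun t => ?_)
        simp only [← h2, mul_sub]
      · exact hIntg (fun t => v (x - t)) (by fun_prop) (fun _ => hvb _)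
      · exact hIntg (fun t => v x) (by fun_prop) (fun _ => hvb _)
    simp_rw [h1]
    refine lintegral_enorm_avg_le hρc hρ1 hρs (G := fun t x => v (x - t) - v x) ?_ ?_
    · simp only [Function.uncurry_def]; fun_prop
    · intro t ht
      have := hT (-t) (by rw [norm_neg]; exact ht.trans_le ((min_le_right _ _).trans (min_le_right _ _)))
      simp only [← sub_eq_add_neg] at this
      refine this.trans (le_trans ?_ hr2ε)
      refine mul_le_mul_right ?_ _
      rw [enorm_neg, ← ofReal_norm]
      exact ENNReal.ofReal_le_ofReal (ht.le.trans ((min_le_right _ _).trans (min_le_left _ _)))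

lemma exists_ball_cover {d : ℕ} {S : Set (Euc (d + 1))} {c : ℝ≥0∞}
    (hc : (μH[(d : ℝ)] : Measure (Euc (d + 1))) S < c) {δ : ℝ} (hδ : 0 < δ) :
    ∃ (ι : Type) (_ : Countable ι) (x : ι → Euc (d + 1)) (r : ι → ℝ),
      (∀ i, 0 < r i ∧ r i ≤ δ) ∧ S ⊆ ⋃ i, ball (x i) (r i) ∧
      ∑' i, ENNReal.ofReal (r i) ^ d ≤ c := by
  rw [Measure.hausdorffMeasure_apply] at hc
  have h1 : 0 < ENNReal.ofReal (δ / 2) := by simpa using hδ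
  have h2 := (le_iSup₂ (f := fun (r : ℝ≥0∞) (_ : 0 < r) =>
    ⨅ (t : ℕ → Set (Euc (d + 1))) (_ : S ⊆ ⋃ n, t n) (_ : ∀ n, ediam (t n) ≤ r),
          ∑' n, ⨆ _ : (t n).Nonempty, ediam (t n) ^ (d : ℝ)) (ENNReal.ofReal (δ / 2)) h1).trans_lt hc
  simp only [iInf_lt_iff] at h2
  obtain ⟨t, hSt, htd, hsum⟩ := h2
  let ι := {n // (t n).Nonempty}
  have hgap : (c - ∑' n, ⨆ _ : (t n).Nonempty, ediam (t n) ^ (d : ℝ)) ≠ 0 :=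
    (tsub_pos_of_lt hsum).ne'
  obtain ⟨ε, hε0, hεsum⟩ := ENNReal.exists_pos_sum_of_countable' hgap ι
  have hchoose : ∀ i : ι, ∃ r : ℝ, (ediam (t i)).toReal < r ∧ r ≤ δ ∧
      ENNReal.ofReal r ^ d ≤ ediam (t i) ^ d + ε i := by
    intro i
    have hfin : ediam (t i) ≠ ⊤ := ((htd i).trans_lt ENNReal.ofReal_lt_top).ne
    have hD : (ediam (t i)).toReal < δ := by
      have := ENNReal.toReal_mono ENNReal.ofReal_ne_top (htd i)
      rw [ENNReal.toReal_ofReal (by linarith)] at this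
      linarith
    have hcont : Tendsto (fun r : ℝ => ENNReal.ofReal r ^ d) (𝓝[>] (ediam (t i)).toReal)
        (𝓝 (ediam (t i) ^ d)) := by
      have : Continuous (fun r : ℝ => ENNReal.ofReal r ^ d) :=
        (ENNReal.continuous_pow d).comp ENNReal.continuous_ofReal
      have h3 := this.tendsto (ediam (t i)).toReal
      rw [ENNReal.ofReal_toReal hfin] at h3
      exact h3.mono_left nhdsWithin_le_nhds
    have hlt : ediam (t i) ^ d < ediam (t i) ^ d + ε i :=
      ENNReal.lt_add_right (ENNReal.pow_ne_top hfin) (hε0 i).ne'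
    have h4 := (hcont.eventually (gt_mem_nhds hlt)).and
      (Ioo_mem_nhdsGT hD : ∀ᶠ r in 𝓝[>] (ediam (t i)).toReal, r ∈ Ioo _ δ)
    obtain ⟨r, hr⟩ := h4.exists
    exact ⟨r, hr.2.1, hr.2.2.le, hr.1.le⟩
  choose r hr1 hr2 hr3 using hchoose
  refine ⟨ι, inferInstance, fun i => i.2.some, r,
    fun i => ⟨ENNReal.toReal_nonneg.trans_lt (hr1 i), hr2 i⟩, ?_, ?_⟩
  · intro y hy
    obtain ⟨n, hn⟩ := mem_iUnion.1 (hSt hy)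
    refine mem_iUnion.2 ⟨⟨n, ⟨y, hn⟩⟩, ?_⟩
    rw [mem_ball]
    refine lt_of_le_of_lt ?_ (hr1 ⟨n, ⟨y, hn⟩⟩)
    have hfin : ediam (t n) ≠ ⊤ := ((htd n).trans_lt ENNReal.ofReal_lt_top).ne
    rw [dist_edist]
    exact ENNReal.toReal_mono hfin (edist_le_ediam_of_mem hn (Set.Nonempty.some_mem _))
  · refine (ENNReal.tsum_le_tsum hr3).trans ?_
    rw [ENNReal.tsum_add]
    have h5 : ∑' i : ι, ediam (t i) ^ d ≤ ∑' n, ⨆ _ : (t n).Nonempty, ediam (t n) ^ (d : ℝ) := by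
      refine le_trans (ENNReal.tsum_le_tsum fun i => ?_)
        (ENNReal.tsum_comp_le_tsum_of_injective (f := ((↑) : ι → ℕ)) Subtype.val_injective _)
      rw [ciSup_pos i.2, ENNReal.rpow_natCast]
    refine (add_le_add h5 hεsum.le).trans ?_
    exact (add_tsub_cancel_of_le hsum.le).le

lemma volume_ball_eq {d : ℕ} (x : Euc (d + 1)) {r : ℝ} (hr : 0 ≤ r) :
    volume (ball x r) = ENNReal.ofReal r ^ (d + 1) * volume (ball (0 : Euc (d + 1)) 1) := by
  rw [Measure.addHaar_ball _ _ hr, finrank_euclideanSpace, Fintype.card_fin,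
    ENNReal.ofReal_pow hr]

lemma volume_capsule_le {d : ℕ} (h c : Euc (d + 1)) {ρ : ℝ} (hρ : 0 < ρ) (hρh : ρ ≤ ‖h‖) :
    volume {x : Euc (d + 1) | ∃ s ∈ Icc (0:ℝ) 1, x + s • h ∈ ball c ρ} ≤
      3 * 2 ^ (d + 1) * volume (ball (0 : Euc (d + 1)) 1) * ‖h‖ₑ * ENNReal.ofReal ρ ^ d := by
  set N := ⌈‖h‖ / ρ⌉₊ with hN
  have hh : 0 < ‖h‖ := hρ.trans_le hρh
  have hNpos : 0 < N := Nat.ceil_pos.2 (by positivity)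
  have hNr : (0:ℝ) < N := by exact_mod_cast hNpos
  have hNge : ‖h‖ / ρ ≤ N := Nat.le_ceil _
  have hNlt : (N : ℝ) < ‖h‖ / ρ + 1 := Nat.ceil_lt_add_one (by positivity)
  have hcov : {x : Euc (d + 1) | ∃ s ∈ Icc (0:ℝ) 1, x + s • h ∈ ball c ρ} ⊆
      ⋃ j ∈ Finset.range (N + 1), ball (c - ((j : ℝ) / N) • h) (2 * ρ) := by
    rintro x ⟨s, ⟨hs0, hs1⟩, hx⟩
    refine mem_iUnion₂.2 ⟨⌊s * N⌋₊, ?_, ?_⟩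
    · rw [Finset.mem_range, Nat.lt_succ_iff]
      exact Nat.floor_le_of_le (by nlinarith)
    · have h1 : (⌊s * N⌋₊ : ℝ) ≤ s * N := Nat.floor_le (by positivity)
      have h2 : s * N < ⌊s * N⌋₊ + 1 := Nat.lt_floor_add_one _
      set j : ℝ := (⌊s * N⌋₊ : ℝ)
      have h3 : |s - j / N| ≤ 1 / N := by
        rw [show s - j / N = (s * N - j) / N by field_simp, abs_div, abs_of_pos hNr]
        refine div_le_div_of_nonneg_right ?_ hNr.le
        rw [abs_le]; constructor <;> linarith
      rw [mem_ball, dist_eq_norm] at hx ⊢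
      have h4 : x - (c - (j / N) • h) = (x + s • h - c) - (s - j / N) • h := by
        rw [sub_smul]; abel
      rw [h4]
      have h5 : ‖(s - j / N) • h‖ ≤ ρ := by
        rw [norm_smul, Real.norm_eq_abs]
        have h6 : |s - j / N| * ‖h‖ ≤ 1 / N * ‖h‖ := mul_le_mul_of_nonneg_right h3 hh.le
        refine h6.trans ?_
        rw [div_le_iff₀ hρ] at hNge
        rw [one_div, inv_mul_le_iff₀ hNr]
        linarith
      exact (norm_sub_le _ _).trans_lt (by linarith)
  refine (measure_mono hcov).trans ((measure_biUnion_finset_le _ _).trans ?_)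
  have h7 : ∀ j ∈ Finset.range (N + 1), volume (ball (c - ((j : ℝ) / N) • h) (2 * ρ)) =
      ENNReal.ofReal (2 * ρ) ^ (d + 1) * volume (ball (0 : Euc (d + 1)) 1) := fun j _ =>
    volume_ball_eq _ (by positivity)
  rw [Finset.sum_congr rfl h7, Finset.sum_const, Finset.card_range, nsmul_eq_mul]
  have h8 : ((N + 1 : ℕ) : ℝ≥0∞) * ENNReal.ofReal ρ ≤ 3 * ‖h‖ₑ := by
    rw [← ofReal_norm, ← ENNReal.ofReal_natCast, ← ENNReal.ofReal_mul (by positivity),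
      show (3 : ℝ≥0∞) = ENNReal.ofReal 3 by simp, ← ENNReal.ofReal_mul (by norm_num)]
    refine ENNReal.ofReal_le_ofReal ?_
    push_cast
    have : (N : ℝ) * ρ < (‖h‖ / ρ + 1) * ρ := mul_lt_mul_of_pos_right hNlt hρ
    rw [add_mul, div_mul_cancel₀ _ hρ.ne'] at this
    linarith
  rw [ENNReal.ofReal_mul (by norm_num), mul_pow, pow_succ (ENNReal.ofReal ρ)]
  simp only [ENNReal.ofReal_ofNat]
  calc ((N + 1 : ℕ) : ℝ≥0∞) * (2 ^ (d + 1) * (ENNReal.ofReal ρ ^ d * ENNReal.ofReal ρ) *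
        volume (ball (0 : Euc (d + 1)) 1))
      = (((N + 1 : ℕ) : ℝ≥0∞) * ENNReal.ofReal ρ) * (2 ^ (d + 1) * ENNReal.ofReal ρ ^ d *
        volume (ball (0 : Euc (d + 1)) 1)) := by ring
    _ ≤ (3 * ‖h‖ₑ) * (2 ^ (d + 1) * ENNReal.ofReal ρ ^ d *
        volume (ball (0 : Euc (d + 1)) 1)) := by gcongr
    _ = _ := by ring

lemma volume_sweep_le {d : ℕ} {h : Euc (d + 1)} (hh : h ≠ 0) (S : Set (Euc (d + 1))) :
    volume {x : Euc (d + 1) | ∃ s ∈ Icc (0:ℝ) 1, x + s • h ∈ S} ≤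
      3 * 2 ^ (d + 1) * volume (ball (0 : Euc (d + 1)) 1) * ‖h‖ₑ *
        (μH[(d : ℝ)] : Measure (Euc (d + 1))) S := by
  set K := 3 * 2 ^ (d + 1) * volume (ball (0 : Euc (d + 1)) 1) * ‖h‖ₑ with hK
  have hω0 : volume (ball (0 : Euc (d + 1)) 1) ≠ 0 := (measure_ball_pos _ _ one_pos).ne'
  have hωt : volume (ball (0 : Euc (d + 1)) 1) ≠ ⊤ := measure_ball_lt_top.ne
  have hK0 : K ≠ 0 := by
    simp [hK, hh, hω0]
  have hKt : K ≠ ⊤ := by finiteness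
  rw [mul_comm, ← ENNReal.div_le_iff hK0 hKt]
  refine le_of_forall_gt_imp_ge_of_dense fun c hc => ?_
  rw [ENNReal.div_le_iff hK0 hKt, mul_comm]
  obtain ⟨ι, _, x, r, hr, hcov, hsum⟩ := exists_ball_cover hc (norm_pos_iff.2 hh)
  have h1 : {x : Euc (d + 1) | ∃ s ∈ Icc (0:ℝ) 1, x + s • h ∈ S} ⊆
      ⋃ i, {y : Euc (d + 1) | ∃ s ∈ Icc (0:ℝ) 1, y + s • h ∈ ball (x i) (r i)} := by
    rintro y ⟨s, hs, hy⟩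
    obtain ⟨i, hi⟩ := mem_iUnion.1 (hcov hy)
    exact mem_iUnion.2 ⟨i, s, hs, hi⟩
  refine (measure_mono h1).trans ((measure_iUnion_le _).trans ?_)
  refine (ENNReal.tsum_le_tsum fun i => volume_capsule_le h (x i) (hr i).1 (hr i).2).trans ?_
  rw [ENNReal.tsum_mul_left]
  gcongr

lemma volume_zero_of_hausdorff {d : ℕ} {S : Set (Euc (d + 1))}
    (hS : (μH[(d : ℝ)] : Measure (Euc (d + 1))) S ≠ ⊤) : volume S = 0 := by
  set K := 3 * 2 ^ (d + 1) * volume (ball (0 : Euc (d + 1)) 1) with hK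
  have hωt : volume (ball (0 : Euc (d + 1)) 1) ≠ ⊤ := measure_ball_lt_top.ne
  let e : Euc (d + 1) := EuclideanSpace.single 0 1
  have he : ‖e‖ = 1 := by simp [e]
  have h1 : ∀ t : ℝ, 0 < t → volume S ≤ K * ENNReal.ofReal t *
      (μH[(d : ℝ)] : Measure (Euc (d + 1))) S := by
    intro t ht
    have hne : t • e ≠ 0 := by
      rw [← norm_pos_iff, norm_smul, he]; simpa using ht.ne'
    have h2 := volume_sweep_le hne S
    rw [← ofReal_norm, norm_smul, he, mul_one, Real.norm_of_nonneg ht.le] at h2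
    have hsub : S ⊆ {x : Euc (d + 1) | ∃ s ∈ Icc (0:ℝ) 1, x + s • (t • e) ∈ S} :=
      fun x hx => ⟨0, by simp, by simpa using hx⟩
    exact le_trans (measure_mono hsub) h2
  have h3 : Tendsto (fun t : ℝ => K * ENNReal.ofReal t *
      (μH[(d : ℝ)] : Measure (Euc (d + 1))) S) (𝓝[>] 0) (𝓝 0) := by
    have h4 : Tendsto (fun t : ℝ => ENNReal.ofReal t) (𝓝[>] 0) (𝓝 0) := by
      have := ENNReal.continuous_ofReal.tendsto (0:ℝ)
      rw [ENNReal.ofReal_zero] at this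
      exact this.mono_left nhdsWithin_le_nhds
    have h5 := ENNReal.Tendsto.mul_const (ENNReal.Tendsto.const_mul h4 (Or.inr (by finiteness : K ≠ ⊤)))
      (Or.inr hS)
    simpa using h5
  refine le_antisymm (ge_of_tendsto h3 ?_) bot_le
  filter_upwards [self_mem_nhdsWithin] with t ht using h1 t ht

/-- first exit time from `A` in direction `h`, capped at `1`. -/
def exitTime {m : ℕ} (A : Set (Euc m)) (h x : Euc m) : ℝ :=
  sInf {s : ℝ | 0 ≤ s ∧ s ≤ 1 ∧ (x + s • h ∉ A ∨ s = 1)}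

lemma exitTime_mem {m : ℕ} {A : Set (Euc m)} (hA : IsOpen A) (h x : Euc m) :
    exitTime A h x ∈ {s : ℝ | 0 ≤ s ∧ s ≤ 1 ∧ (x + s • h ∉ A ∨ s = 1)} := by
  refine IsClosed.csInf_mem ?_ ⟨1, by simp⟩ ⟨0, fun s hs => hs.1⟩
  have h1 : IsClosed {s : ℝ | x + s • h ∉ A} :=
    hA.isClosed_compl.preimage (by fun_prop : Continuous fun s : ℝ => x + s • h)
  exact isClosed_Ici.inter (isClosed_Iic.inter (h1.union isClosed_singleton))

lemma exitTime_le {m : ℕ} {A : Set (Euc m)} {h x : Euc m} {s : ℝ} (hs0 : 0 ≤ s) (hs1 : s ≤ 1)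
    (hs : x + s • h ∉ A ∨ s = 1) : exitTime A h x ≤ s :=
  csInf_le ⟨0, fun _ hs => hs.1⟩ ⟨hs0, hs1, hs⟩

lemma mem_of_lt_exitTime {m : ℕ} {A : Set (Euc m)} (hA : IsOpen A) {h x : Euc m} {s : ℝ}
    (hs0 : 0 ≤ s) (hs : s < exitTime A h x) : x + s • h ∈ A := by
  by_contra hcon
  have h1 := (exitTime_mem hA h x).2.1
  exact absurd (exitTime_le hs0 (hs.le.trans h1) (Or.inl hcon)) (not_le.2 hs)

lemma measurable_exitTime {m : ℕ} {A : Set (Euc m)} (hA : IsOpen A) (h : Euc m) :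
    Measurable (exitTime A h) := by
  refine measurable_of_Iic fun c => ?_
  rcases lt_or_ge c 0 with hc | hc
  · have : exitTime A h ⁻¹' Iic c = ∅ := by
      rw [eq_empty_iff_forall_notMem]
      intro x hx
      have := (exitTime_mem hA h x).1
      have h2 : exitTime A h x ≤ c := hx
      linarith
    rw [this]; exact MeasurableSet.empty
  rcases le_or_gt 1 c with hc1 | hc1
  · have : exitTime A h ⁻¹' Iic c = univ := by
      rw [eq_univ_iff_forall]
      intro x
      exact (exitTime_mem hA h x).2.1.trans hc1
    rw [this]; exact MeasurableSet.univ
  have : exitTime A h ⁻¹' Iic c = {x | ∀ s ∈ Icc 0 c, x + s • h ∈ A}ᶜ := by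
    ext x
    simp only [mem_preimage, mem_Iic, mem_compl_iff, mem_ofPred_eq, not_forall]
    constructor
    · intro hx
      obtain ⟨h1, h2, h3⟩ := exitTime_mem hA h x
      refine ⟨exitTime A h x, ⟨h1, hx⟩, ?_⟩
      rcases h3 with h3 | h3
      · exact h3
      · linarith
    · rintro ⟨s, hs, hx⟩
      exact (exitTime_le hs.1 (hs.2.trans hc1.le) (Or.inl hx)).trans hs.2
  rw [this]
  refine (IsOpen.measurableSet ?_).compl
  rw [isOpen_iff_mem_nhds]
  intro x hx
  have := isCompact_Icc.eventually_forall_of_forall_eventually (x₀ := x) (K := Icc 0 c)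
    (P := fun y s => y + s • h ∈ A) (fun s hs => by
      have hc : Continuous (fun p : Euc m × ℝ => p.1 + p.2 • h) := by fun_prop
      exact hc.continuousAt.eventually (hA.mem_nhds (hx s hs)))
  exact this

lemma volume_pair_null {d : ℕ} {A M : Set (Euc (d + 1))} (hA : IsOpen A)
    (hAt : volume A ≠ ⊤) (h : Euc (d + 1)) (hMm : MeasurableSet M) (hMA : M ⊆ A)
    (k : ℕ) (hM : ∀ x ∈ M, 0 < exitTime A h x ∧ ∀ n ≥ k,
      volume (A ∩ closedBall (x + exitTime A h x • h) ((1/2)^n)) ≤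
        (2 ^ (d + 3))⁻¹ * volume (closedBall (x + exitTime A h x • h) ((1/2)^n))) :
    volume M = 0 := by
  set ω := volume (ball (0 : Euc (d + 1)) 1) with hω
  have hω0 : ω ≠ 0 := (measure_ball_pos _ _ one_pos).ne'
  have hωt : ω ≠ ⊤ := measure_ball_lt_top.ne
  have hMt : volume M ≠ ⊤ := measure_ne_top_of_subset hMA hAt
  let T := exitTime A h
  have hT : Measurable T := measurable_exitTime hA h
  have hvcb : ∀ (x : Euc (d + 1)) (r : ℝ), 0 ≤ r →
      volume (closedBall x r) = ENNReal.ofReal r ^ (d + 1) * ω := fun x r hr => by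
    rw [Measure.addHaar_closedBall_eq_addHaar_ball, volume_ball_eq x hr]
  let ρ : ℕ → ℝ := fun n => (1/2)^(n+1)
  have hρ : ∀ n, 0 < ρ n := fun n => by positivity
  -- the slice bound
  let W : ℕ → Set (Euc (d + 1) × Euc (d + 1)) := fun n =>
    {p | (p.1 ∈ M ∧ p.2 ∈ M) ∧ dist p.2 p.1 ≤ ρ n ∧ T p.1 ≤ T p.2}
  have hWm : ∀ n, MeasurableSet (W n) := by
    intro n
    refine ((hMm.preimage measurable_fst).inter (hMm.preimage measurable_snd)).inter ?_
    refine MeasurableSet.inter ?_ ?_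
    · exact measurableSet_le (measurable_snd.dist measurable_fst) measurable_const
    · exact measurableSet_le (hT.comp measurable_fst) (hT.comp measurable_snd)
  have hslice : ∀ n ≥ k, ∀ x, volume (Prod.mk x ⁻¹' W n) ≤
      M.indicator (fun _ => (2 ^ (d + 3))⁻¹ * (ENNReal.ofReal ((1/2)^n) ^ (d + 1) * ω)) x := by
    intro n hn x
    by_cases hx : x ∈ M
    · rw [indicator_of_mem hx]
      obtain ⟨hT0, hd⟩ := hM x hx
      have hd := hd n hn
      rw [hvcb _ _ (by positivity)] at hd
      refine le_trans ?_ hd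
      obtain ⟨s, hs0, hsT, hsh⟩ : ∃ s : ℝ, 0 < s ∧ s ≤ T x ∧ s * ‖h‖ ≤ ρ n := by
        refine ⟨min (T x) (ρ n / (‖h‖ + 1)), ?_, min_le_left _ _, ?_⟩
        · have := hρ n
          have : 0 < T x := hT0
          positivity
        · have h1 : min (T x) (ρ n / (‖h‖ + 1)) ≤ ρ n / (‖h‖ + 1) := min_le_right _ _
          refine (mul_le_mul_of_nonneg_right h1 (norm_nonneg h)).trans ?_
          rw [div_mul_eq_mul_div, div_le_iff₀ (by positivity)]
          nlinarith [hρ n, norm_nonneg h]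
      have hsub : Prod.mk x ⁻¹' W n ⊆ (fun y => y + (T x - s) • h) ⁻¹'
          (A ∩ closedBall (x + T x • h) ((1/2)^n)) := by
        rintro y ⟨⟨-, hyM⟩, hdist, hle⟩
        simp only at hyM hdist hle
        refine ⟨mem_of_lt_exitTime hA (by linarith) (lt_of_lt_of_le (by linarith) hle), ?_⟩
        rw [mem_closedBall, dist_eq_norm]
        have h2 : y + (T x - s) • h - (x + T x • h) = (y - x) - s • h := by
          rw [sub_smul]; abel
        rw [h2]
        refine (norm_sub_le _ _).trans ?_
        rw [norm_smul, Real.norm_of_nonneg hs0.le, ← dist_eq_norm]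
        have : ρ n + ρ n = (1/2)^n := by simp only [ρ, pow_succ]; ring
        linarith
      refine (measure_mono hsub).trans ?_
      rw [measure_preimage_add_right]
    · rw [indicator_of_notMem hx]
      have : Prod.mk x ⁻¹' W n = ∅ := by
        rw [eq_empty_iff_forall_notMem]
        rintro y ⟨⟨h1, -⟩, -⟩
        exact hx h1
      rw [this]; simp
  have hWle : ∀ n ≥ k, (volume.prod volume) (W n) ≤
      (2 ^ (d + 3))⁻¹ * (ENNReal.ofReal ((1/2)^n) ^ (d + 1) * ω) * volume M := by
    intro n hn
    rw [Measure.prod_apply (hWm n)]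
    refine (lintegral_mono (hslice n hn)).trans ?_
    rw [lintegral_indicator_const hMm]
  let P : ℕ → Set (Euc (d + 1) × Euc (d + 1)) := fun n =>
    {p | (p.1 ∈ M ∧ p.2 ∈ M) ∧ dist p.2 p.1 ≤ ρ n}
  have hPm : ∀ n, MeasurableSet (P n) := by
    intro n
    refine ((hMm.preimage measurable_fst).inter (hMm.preimage measurable_snd)).inter ?_
    exact measurableSet_le (measurable_snd.dist measurable_fst) measurable_const
  have hPle : ∀ n ≥ k, (volume.prod volume) (P n) ≤
      2 * ((2 ^ (d + 3))⁻¹ * (ENNReal.ofReal ((1/2)^n) ^ (d + 1) * ω) * volume M) := by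
    intro n hn
    have hsub : P n ⊆ W n ∪ Prod.swap ⁻¹' W n := by
      rintro ⟨x, y⟩ ⟨⟨hx, hy⟩, hd⟩
      rcases le_total (T x) (T y) with hle | hle
      · exact Or.inl ⟨⟨hx, hy⟩, hd, hle⟩
      · exact Or.inr ⟨⟨hy, hx⟩, by rw [dist_comm]; exact hd, hle⟩
    refine (measure_mono hsub).trans ((measure_union_le _ _).trans ?_)
    rw [(Measure.measurePreserving_swap (μ := (volume : Measure (Euc (d + 1))))
      (ν := (volume : Measure (Euc (d + 1))))).measure_preimage (hWm n).nullMeasurableSet, ← two_mul]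
    gcongr
    exact hWle n hn
  -- density
  let f : ℕ → Euc (d + 1) → ℝ≥0∞ := fun n x =>
    volume (M ∩ closedBall x (ρ n)) / (ENNReal.ofReal (ρ n) ^ (d + 1) * ω)
  have hfm : ∀ n, Measurable (f n) := by
    intro n
    refine Measurable.div_const ?_ _
    have : MeasurableSet {p : Euc (d + 1) × Euc (d + 1) | p.2 ∈ M ∧ dist p.2 p.1 ≤ ρ n} :=
      (hMm.preimage measurable_snd).inter
        (measurableSet_le (measurable_snd.dist measurable_fst) measurable_const)
    exact measurable_measure_prodMk_left this
  have hfint : ∀ n ≥ k, ∫⁻ x in M, f n x ≤ 2⁻¹ * volume M := by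
    intro n hn
    have hρn0 : ENNReal.ofReal (ρ n) ^ (d + 1) ≠ 0 := by
      exact pow_ne_zero _ (by simpa using hρ n)
    have hPeq : (volume.prod volume) (P n) = ∫⁻ x in M, volume (M ∩ closedBall x (ρ n)) := by
      rw [Measure.prod_apply (hPm n), ← lintegral_indicator hMm]
      refine lintegral_congr fun x => ?_
      by_cases hx : x ∈ M
      · rw [indicator_of_mem hx]
        congr 1
        ext y
        constructor
        · rintro ⟨⟨-, h1⟩, h2⟩; exact ⟨h1, h2⟩
        · rintro ⟨h1, h2⟩; exact ⟨⟨hx, h1⟩, h2⟩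
      · rw [indicator_of_notMem hx]
        have : Prod.mk x ⁻¹' P n = ∅ := by
          rw [eq_empty_iff_forall_notMem]
          rintro y ⟨⟨h1, -⟩, -⟩
          exact hx h1
        rw [this]; simp
    simp only [f, div_eq_mul_inv]
    rw [lintegral_mul_const', ← hPeq, ← div_eq_mul_inv]
    · refine ENNReal.div_le_of_le_mul ((hPle n hn).trans ?_)
      have h1 : ENNReal.ofReal ((1/2)^n) = 2 * ENNReal.ofReal (ρ n) := by
        rw [show (2 : ℝ≥0∞) = ENNReal.ofReal 2 by simp, ← ENNReal.ofReal_mul (by norm_num)]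
        congr 1
        simp only [ρ, pow_succ]; ring
      rw [h1, mul_pow, pow_succ (2 : ℝ≥0∞) (d + 2), pow_succ (2 : ℝ≥0∞) (d + 1)]
      have h2 : ((2 : ℝ≥0∞) ^ (d + 1) * 2 * 2)⁻¹ = (2 ^ (d + 1))⁻¹ * 2⁻¹ * 2⁻¹ := by
        rw [ENNReal.mul_inv (by simp) (by simp), ENNReal.mul_inv (by simp) (by simp)]
      rw [h2]
      have h3 : (2 : ℝ≥0∞) * 2⁻¹ = 1 := ENNReal.mul_inv_cancel (by simp) (by simp)
      have h4 : (2 : ℝ≥0∞) ^ (d + 1) * (2 ^ (d + 1))⁻¹ = 1 := ENNReal.mul_inv_cancel (by simp) (by simp)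
      calc 2 * ((2 ^ (d + 1))⁻¹ * 2⁻¹ * 2⁻¹ * (2 ^ (d + 1) * ENNReal.ofReal (ρ n) ^ (d + 1) * ω) * volume M)
          = (2 * 2⁻¹) * (2 ^ (d + 1) * (2 ^ (d + 1))⁻¹) *
            (2⁻¹ * volume M * (ENNReal.ofReal (ρ n) ^ (d + 1) * ω)) := by ring
        _ ≤ _ := by rw [h3, h4, one_mul, one_mul]
    · exact ENNReal.inv_ne_top.2 (mul_ne_zero hρn0 hω0)
  have hdens : ∀ᵐ x ∂(volume.restrict M), Tendsto (fun n => f n x) atTop (𝓝 1) := by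
    filter_upwards [Besicovitch.ae_tendsto_measure_inter_div volume M] with x hx
    have hρ0 : Tendsto ρ atTop (𝓝[>] 0) := by
      refine tendsto_nhdsWithin_iff.2 ⟨?_, Eventually.of_forall hρ⟩
      exact (tendsto_add_atTop_iff_nat 1).2
        (tendsto_pow_atTop_nhds_zero_of_lt_one (by norm_num) (by norm_num))
    refine (hx.comp hρ0).congr fun n => ?_
    simp only [Function.comp, f, hvcb x _ (hρ n).le]
  have hfin : volume M ≤ 2⁻¹ * volume M := by
    calc volume M = ∫⁻ x in M, liminf (fun n => f n x) atTop := by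
          rw [lintegral_congr_ae (g := fun _ => (1 : ℝ≥0∞))]
          · simp
          · filter_upwards [hdens] with x hx using hx.liminf_eq
      _ ≤ liminf (fun n => ∫⁻ x in M, f n x) atTop := lintegral_liminf_le hfm
      _ ≤ 2⁻¹ * volume M := by
          refine liminf_le_of_le (by isBoundedDefault) fun b hb => ?_
          obtain ⟨n, hn, hn2⟩ := (hb.and (eventually_ge_atTop k)).exists
          exact hn.trans (hfint n hn2)
  by_contra hne
  have : 2⁻¹ * volume M < volume M := by
    rw [mul_comm, ← div_eq_mul_inv]
    exact ENNReal.half_lt_self hne hMt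
  exact absurd hfin (not_le.2 this)

lemma measurableSet_density {m : ℕ} {A : Set (Euc m)} (hA : MeasurableSet A) (ρ : ℝ) (c : ℝ≥0∞) :
    MeasurableSet {z : Euc m | volume (A ∩ closedBall z ρ) ≤ c * volume (closedBall z ρ)} := by
  have h1 : Measurable fun z : Euc m => volume (A ∩ closedBall z ρ) := by
    have : MeasurableSet {p : Euc m × Euc m | p.2 ∈ A ∧ dist p.2 p.1 ≤ ρ} :=
      (hA.preimage measurable_snd).inter
        (measurableSet_le (measurable_snd.dist measurable_fst) measurable_const)
    exact measurable_measure_prodMk_left this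
  have h2 : Measurable fun z : Euc m => volume (closedBall z ρ) := by
    have : MeasurableSet {p : Euc m × Euc m | dist p.2 p.1 ≤ ρ} :=
        (measurableSet_le (measurable_snd.dist measurable_fst) measurable_const)
    exact measurable_measure_prodMk_left this
  exact measurableSet_le h1 (h2.const_mul c)

/-- points where the density tends to zero: eventually small ratio along any sequence. -/
lemma extMeas_eventually {m : ℕ} {A : Set (Euc m)} {z : Euc m} (hz : z ∈ extMeas A) {ρ : ℕ → ℝ}
    (hρ : ∀ n, 0 < ρ n) (hρ0 : Tendsto ρ atTop (𝓝 0)) {c : ℝ≥0∞} (hc : 0 < c) :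
    ∀ᶠ n in atTop, volume (A ∩ closedBall z (ρ n)) ≤ c * volume (closedBall z (ρ n)) := by
  have h1 : Tendsto ρ atTop (𝓝[>] 0) :=
    tendsto_nhdsWithin_iff.2 ⟨hρ0, Eventually.of_forall hρ⟩
  have h2 := (Tendsto.comp (show Tendsto _ _ _ from hz) h1).eventually (gt_mem_nhds hc)
  filter_upwards [h2] with n hn
  have h3 : volume (closedBall z (ρ n)) ≠ 0 := (measure_closedBall_pos volume z (hρ n)).ne'
  have h4 : volume (closedBall z (ρ n)) ≠ ⊤ := measure_closedBall_lt_top.ne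
  exact (ENNReal.div_le_iff h3 h4).1 hn.le

lemma volume_cross_null {d : ℕ} {A : Set (Euc (d + 1))} (hA : IsOpen A)
    (hAt : volume A ≠ ⊤) (h : Euc (d + 1)) :
    volume {x | x ∈ A ∧ x + h ∉ A ∧
      ∀ s ∈ Icc (0 : ℝ) 1, x + s • h ∉ frontier A \ extMeas A} = 0 := by
  let D : ℕ → Set (Euc (d + 1)) := fun k => ⋂ n ∈ Ici k,
    {z | volume (A ∩ closedBall z ((1/2)^n)) ≤ (2 ^ (d + 3))⁻¹ * volume (closedBall z ((1/2)^n))}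
  have hDm : ∀ k, MeasurableSet (D k) := fun k =>
    MeasurableSet.biInter (to_countable _) fun n _ => measurableSet_density hA.measurableSet _ _
  let M : ℕ → Set (Euc (d + 1)) := fun k =>
    A ∩ ((fun x => x + h) ⁻¹' Aᶜ ∩ (fun x => x + exitTime A h x • h) ⁻¹' D k)
  have hMm : ∀ k, MeasurableSet (M k) := by
    intro k
    have hm := measurable_exitTime hA h
    refine hA.measurableSet.inter ((hA.measurableSet.compl.preimage (measurable_add_const h)).inter
      ((hDm k).preimage ?_))
    exact measurable_id.add (hm.smul_const h)
  have hpos : ∀ x ∈ A, 0 < exitTime A h x := by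
    intro x hx
    obtain ⟨h1, -, h3⟩ := exitTime_mem hA h x
    rcases h1.lt_or_eq with h4 | h4
    · exact h4
    · exfalso
      rw [← h4] at h3
      rcases h3 with h3 | h3
      · simp at h3; exact h3 hx
      · norm_num at h3
  have hM0 : ∀ k, volume (M k) = 0 := by
    intro k
    refine volume_pair_null hA hAt h (hMm k) inter_subset_left k ?_
    intro x hx
    refine ⟨hpos x hx.1, fun n hn => ?_⟩
    have h1 := hx.2.2
    simp only [mem_preimage, D, mem_iInter₂] at h1
    exact h1 n hn
  refine measure_mono_null ?_ (measure_iUnion_null hM0)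
  rintro x ⟨hx, hxh, hxK⟩
  obtain ⟨h1, h2, h3⟩ := exitTime_mem hA h x
  have hz : x + exitTime A h x • h ∉ A := by
    rcases h3 with h3 | h3
    · exact h3
    · rw [h3, one_smul]; exact hxh
  have hzc : x + exitTime A h x • h ∈ closure A := by
    have hc : Continuous fun s : ℝ => x + s • h := by fun_prop
    have h4 : exitTime A h x ∈ closure (Ico 0 (exitTime A h x)) := by
      rw [closure_Ico (hpos x hx).ne]; exact ⟨h1, le_rfl⟩
    exact map_mem_closure (f := fun s : ℝ => x + s • h) hc h4 fun s hs => mem_of_lt_exitTime hA hs.1 hs.2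
  have hzf : x + exitTime A h x • h ∈ frontier A := by
    rw [hA.frontier_eq]; exact ⟨hzc, hz⟩
  have hze : x + exitTime A h x • h ∈ extMeas A := by
    by_contra hcon
    exact hxK _ ⟨h1, h2⟩ ⟨hzf, hcon⟩
  have h5 := extMeas_eventually hze (ρ := fun n => (1/2)^n) (fun n => by positivity)
    (tendsto_pow_atTop_nhds_zero_of_lt_one (by norm_num) (by norm_num))
    (c := (2 ^ (d + 3))⁻¹) (ENNReal.inv_pos.2 (ENNReal.pow_ne_top (by simp)))
  obtain ⟨k, hk⟩ := eventually_atTop.1 h5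
  refine mem_iUnion.2 ⟨k, hx, hxh, ?_⟩
  simp only [mem_preimage, D, mem_iInter₂]
  exact fun n hn => hk n hn

/-- relative isoperimetric type inequality. -/
lemma volume_mul_le {d : ℕ} {A : Set (Euc (d + 1))} (hA : IsOpen A)
    (hAt : volume A ≠ ⊤) (c : Euc (d + 1)) {r : ℝ} (hr : 0 < r) :
    volume (A ∩ ball c r) * volume (ball c r \ A) ≤
      volume (ball (0 : Euc (d + 1)) (2 * r)) * (3 * 2 ^ (d + 1) * volume (ball (0 : Euc (d + 1)) 1)
        * ENNReal.ofReal (2 * r) * μH[(d : ℝ)] ((frontier A \ extMeas A) ∩ ball c r)) := by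
  set X := ball c r
  set κ := 3 * 2 ^ (d + 1) * volume (ball (0 : Euc (d + 1)) 1)
        * ENNReal.ofReal (2 * r) * μH[(d : ℝ)] ((frontier A \ extMeas A) ∩ X)
  have hXm : MeasurableSet X := measurableSet_ball
  have hAm := hA.measurableSet
  have hP : MeasurableSet {p : Euc (d + 1) × Euc (d + 1) | p.2 ∈ A ∩ X ∧ p.2 + p.1 ∈ X \ A} :=
    ((hAm.inter hXm).preimage measurable_snd).inter
      ((hXm.diff hAm).preimage (measurable_snd.add measurable_fst))
  have h1 : ∫⁻ h, volume {x | x ∈ A ∩ X ∧ x + h ∈ X \ A} =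
      volume (A ∩ X) * volume (X \ A) := by
    have e1 := Measure.prod_apply (μ := (volume : Measure (Euc (d + 1))))
      (ν := (volume : Measure (Euc (d + 1)))) hP
    have e2 := Measure.prod_apply_symm (μ := (volume : Measure (Euc (d + 1))))
      (ν := (volume : Measure (Euc (d + 1)))) hP
    rw [e1] at e2
    refine Eq.trans e2 ?_
    have : ∀ y, volume ((fun x => (x, y)) ⁻¹'
        {p : Euc (d + 1) × Euc (d + 1) | p.2 ∈ A ∩ X ∧ p.2 + p.1 ∈ X \ A}) =
        (A ∩ X).indicator (fun _ => volume (X \ A)) y := by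
      intro y
      by_cases hy : y ∈ A ∩ X
      · rw [indicator_of_mem hy]
        rw [← measure_preimage_add volume y (X \ A)]
        congr 1
        ext z
        exact ⟨fun hz => hz.2, fun hz => ⟨hy, hz⟩⟩
      · rw [indicator_of_notMem hy]
        convert measure_empty (μ := (volume : Measure (Euc (d + 1))))
        rw [eq_empty_iff_forall_notMem]
        exact fun z hz => hy hz.1
    simp_rw [this]
    rw [lintegral_indicator (hAm.inter hXm), lintegral_const]
    simp [mul_comm]
  rw [← h1]
  have h2 : ∀ h, volume {x | x ∈ A ∩ X ∧ x + h ∈ X \ A} ≤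
      (ball (0 : Euc (d + 1)) (2 * r)).indicator (fun _ => κ) h := by
    intro h
    by_cases hh : h ∈ ball (0 : Euc (d + 1)) (2 * r)
    · rw [indicator_of_mem hh]
      rcases eq_or_ne h 0 with rfl | hne
      · have : {x | x ∈ A ∩ X ∧ x + 0 ∈ X \ A} = ∅ := by
          rw [eq_empty_iff_forall_notMem]
          rintro x ⟨h1, h2⟩
          rw [add_zero] at h2
          exact h2.2 h1.1
        rw [this]; simp
      have hsub : {x | x ∈ A ∩ X ∧ x + h ∈ X \ A} ⊆
          {x | x ∈ A ∧ x + h ∉ A ∧ ∀ s ∈ Icc (0 : ℝ) 1, x + s • h ∉ frontier A \ extMeas A} ∪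
          {x | ∃ s ∈ Icc (0 : ℝ) 1, x + s • h ∈ (frontier A \ extMeas A) ∩ X} := by
        rintro x ⟨hx, hxh⟩
        by_cases hs : ∀ s ∈ Icc (0 : ℝ) 1, x + s • h ∉ frontier A \ extMeas A
        · exact Or.inl ⟨hx.1, hxh.2, hs⟩
        · push Not at hs
          obtain ⟨s, hs, hs'⟩ := hs
          refine Or.inr ⟨s, hs, hs', ?_⟩
          have := (convex_ball c r).add_smul_sub_mem hx.2 hxh.1 hs
          simpa [X] using this
      refine (measure_mono hsub).trans ((measure_union_le _ _).trans ?_)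
      rw [volume_cross_null hA hAt, zero_add]
      refine (volume_sweep_le hne _).trans ?_
      have : ‖h‖ₑ ≤ ENNReal.ofReal (2 * r) := by
        rw [← ofReal_norm]
        exact ENNReal.ofReal_le_ofReal (by simpa using (mem_ball_zero_iff.1 hh).le)
      simp only [κ]
      gcongr
    · rw [indicator_of_notMem hh]
      rw [nonpos_iff_eq_zero]
      convert measure_empty (μ := (volume : Measure (Euc (d + 1))))
      rw [eq_empty_iff_forall_notMem]
      rintro x ⟨hx, hxh⟩
      apply hh
      have h3 := mem_ball.1 hx.2
      have h4 := mem_ball.1 hxh.1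
      rw [mem_ball_zero_iff]
      have : h = (x + h - c) - (x - c) := by abel
      rw [this]
      rw [dist_eq_norm] at h3 h4
      linarith [norm_sub_le (x + h - c) (x - c)]
  refine (lintegral_mono h2).trans ?_
  rw [lintegral_indicator measurableSet_ball, lintegral_const]
  simp [mul_comm]

lemma exists_KL (d : ℕ) : ∃ C : ℝ≥0∞, C ≠ ⊤ ∧ ∀ {A : Set (Euc (d + 1))}, IsOpen A →
    volume A ≠ ⊤ → ∀ (c : Euc (d + 1)) {r : ℝ}, 0 < r →
    (2 ^ (d + 2))⁻¹ * volume (ball c r) ≤ volume (A ∩ ball c r) →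
    (2 ^ (d + 2))⁻¹ * volume (ball c r) ≤ volume (ball c r \ A) →
    ENNReal.ofReal r ^ d ≤ C * μH[(d : ℝ)] ((frontier A \ extMeas A) ∩ ball c r) := by
  set ω := volume (ball (0 : Euc (d + 1)) 1) with hω
  have hω0 : ω ≠ 0 := (measure_ball_pos volume _ one_pos).ne'
  have hωt : ω ≠ ⊤ := measure_ball_lt_top.ne
  set η : ℝ≥0∞ := (2 ^ (d + 2))⁻¹ with hη
  have hη0 : η ≠ 0 := ENNReal.inv_ne_zero.2 (ENNReal.pow_ne_top (by simp))
  have hηt : η ≠ ⊤ := ENNReal.inv_ne_top.2 (by positivity)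
  refine ⟨(η * η * ω * ω)⁻¹ * (2 ^ (d + 1) * ω * (3 * 2 ^ (d + 1) * ω * 2)), ?_, ?_⟩
  · refine ENNReal.mul_ne_top (ENNReal.inv_ne_top.2 ?_) ?_
    · exact mul_ne_zero (mul_ne_zero (mul_ne_zero hη0 hη0) hω0) hω0
    · finiteness
  intro A hA hAt c r hr h1 h2
  have h3 := (mul_le_mul' h1 h2).trans (volume_mul_le hA hAt c hr)
  rw [volume_ball_eq c hr.le, volume_ball_eq 0 (by positivity : (0 : ℝ) ≤ 2 * r), ← hω,
    ENNReal.ofReal_mul (by norm_num)] at h3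
  set μ := μH[(d : ℝ)] ((frontier A \ extMeas A) ∩ ball c r)
  set R := ENNReal.ofReal r
  have hR0 : R ≠ 0 := by simpa [R] using hr
  have hRt : R ≠ ⊤ := ENNReal.ofReal_ne_top
  rw [show ENNReal.ofReal 2 = 2 by simp] at h3
  have h4 : R ^ (d + 2) * (η * η * ω * ω * R ^ d) ≤
      R ^ (d + 2) * (2 ^ (d + 1) * ω * (3 * 2 ^ (d + 1) * ω * 2) * μ) := by
    calc _ = η * (R ^ (d + 1) * ω) * (η * (R ^ (d + 1) * ω)) := by ring
      _ ≤ _ := h3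
      _ = _ := by ring
  have h5 := (ENNReal.mul_le_mul_iff_right (pow_ne_zero _ hR0) (ENNReal.pow_ne_top hRt)).1 h4
  have hq0 : η * η * ω * ω ≠ 0 := mul_ne_zero (mul_ne_zero (mul_ne_zero hη0 hη0) hω0) hω0
  have hqt : η * η * ω * ω ≠ ⊤ := by finiteness
  calc R ^ d = (η * η * ω * ω)⁻¹ * (η * η * ω * ω * R ^ d) := by
        rw [← mul_assoc, ENNReal.inv_mul_cancel hq0 hqt, one_mul]
    _ ≤ (η * η * ω * ω)⁻¹ * (2 ^ (d + 1) * ω * (3 * 2 ^ (d + 1) * ω * 2) * μ) := by gcongr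
    _ = _ := by ring

lemma vitali_cover {d : ℕ} {C : ℝ≥0∞} (K I : Set (Euc (d + 1))) (ρ : Euc (d + 1) → ℝ) {δ : ℝ}
    (hρ : ∀ x ∈ I, 0 < ρ x ∧ ρ x ≤ δ)
    (hK : ∀ x ∈ I, ENNReal.ofReal (ρ x) ^ d ≤ C * μH[(d : ℝ)] (K ∩ ball x (ρ x))) :
    ∃ u ⊆ I, u.Countable ∧ I ⊆ ⋃ x ∈ u, ball x (5 * ρ x) ∧
      ∑' x : u, ENNReal.ofReal (ρ x) ^ d ≤ C * μH[(d : ℝ)] K := by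
  obtain ⟨u, huI, hud, hcov⟩ := Vitali.exists_disjoint_subfamily_covering_enlargement_ball
    I (fun x => x) ρ δ (fun x hx => (hρ x hx).2) 5 (by norm_num)
  have huc : u.Countable := by
    refine hud.countable_of_isOpen (fun x _ => isOpen_ball) fun x hx => ?_
    exact ⟨x, mem_ball_self (hρ x (huI hx)).1⟩
  refine ⟨u, huI, huc, ?_, ?_⟩
  · intro x hx
    obtain ⟨b, hb, hxb⟩ := hcov x hx
    exact mem_iUnion₂.2 ⟨b, hb, hxb (mem_ball_self (hρ x hx).1)⟩
  · have : Countable u := huc.to_subtype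
    calc ∑' x : u, ENNReal.ofReal (ρ x) ^ d
        ≤ ∑' x : u, C * ((μH[(d : ℝ)] : Measure (Euc (d + 1))).restrict K) (ball (x : Euc (d + 1)) (ρ x)) := by
          refine ENNReal.tsum_le_tsum fun x => ?_
          rw [Measure.restrict_apply measurableSet_ball, inter_comm]
          exact hK x (huI x.2)
      _ = C * ((μH[(d : ℝ)] : Measure (Euc (d + 1))).restrict K) (⋃ x : u, ball (x : Euc (d + 1)) (ρ x)) := by
          rw [ENNReal.tsum_mul_left, measure_iUnion]
          · intro x y hxy
            exact hud x.2 y.2 (fun h => hxy (Subtype.ext h))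
          · exact fun x => measurableSet_ball
      _ ≤ C * ((μH[(d : ℝ)] : Measure (Euc (d + 1))).restrict K) univ := by
          gcongr; exact subset_univ _
      _ = _ := by rw [Measure.restrict_apply_univ]

/-- constant in the shift estimate for balls -/
def cShift (d : ℕ) : ℝ := volume.real (ball (0 : Euc (d + 1)) 1) * ((d + 1) * 2 ^ d)

lemma cShift_nonneg (d : ℕ) : 0 ≤ cShift d := by unfold cShift; positivity

lemma pow_add_le {r s : ℝ} (hr : 0 ≤ r) (hs : 0 ≤ s) (n : ℕ) :
    (r + s) ^ (n + 1) ≤ r ^ (n + 1) + (n + 1) * s * (r + s) ^ n := by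
  induction n with
  | zero => simp
  | succ n ih =>
    have h1 : r ^ (n + 1) ≤ (r + s) ^ (n + 1) := by gcongr; linarith
    have h2 := mul_le_mul_of_nonneg_left ih (by positivity : 0 ≤ r + s)
    have h3 := mul_le_mul_of_nonneg_left h1 hs
    push_cast
    calc (r + s) ^ (n + 1 + 1) = (r + s) * (r + s) ^ (n + 1) := by ring
      _ ≤ _ := h2
      _ = r ^ (n + 1 + 1) + s * r ^ (n + 1) + (n + 1) * s * (r + s) ^ (n + 1) := by ring
      _ ≤ _ := by linarith

lemma volume_real_ball_eq {d : ℕ} (x : Euc (d + 1)) {r : ℝ} (hr : 0 ≤ r) :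
    volume.real (ball x r) = r ^ (d + 1) * volume.real (ball (0 : Euc (d + 1)) 1) := by
  rw [Measure.real, volume_ball_eq x hr, ENNReal.toReal_mul, ENNReal.toReal_pow,
    ENNReal.toReal_ofReal hr, Measure.real]

lemma volume_real_shift_le {d : ℕ} (x y : Euc (d + 1)) {r : ℝ} (hr : 0 < r) (hxy : dist x y ≤ r) :
    volume.real (ball x r \ ball y r) ≤ cShift d * r ^ d * dist x y := by
  have h1 : ball x r \ ball y r ⊆ ball y (r + dist x y) \ ball y r := by
    refine sdiff_subset_sdiff_left fun z hz => ?_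
    rw [mem_ball] at hz ⊢
    linarith [dist_triangle z x y]
  have h2 : volume.real (ball y (r + dist x y) \ ball y r) =
      volume.real (ball y (r + dist x y)) - volume.real (ball y r) :=
    measureReal_sdiff (ball_subset_ball (by linarith [dist_nonneg (x := x) (y := y)])) measurableSet_ball
      measure_ball_lt_top.ne
  refine (measureReal_mono h1 (measure_ne_top_of_subset sdiff_subset measure_ball_lt_top.ne)).trans ?_
  rw [h2, volume_real_ball_eq y (by positivity), volume_real_ball_eq y hr.le]
  have h3 := pow_add_le hr.le (dist_nonneg (x := x) (y := y)) d
  have h4 : (r + dist x y) ^ d ≤ (2 * r) ^ d := by gcongr; linarith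
  unfold cShift
  set ω := volume.real (ball (0 : Euc (d + 1)) 1)
  have hω : 0 ≤ ω := measureReal_nonneg
  have h5 : (d + 1 : ℝ) * dist x y * (r + dist x y) ^ d ≤ (d + 1) * dist x y * (2 * r) ^ d := by
    gcongr
  have h6 := mul_le_mul_of_nonneg_left (h3.trans (add_le_add_right h5 _)) hω
  rw [mul_pow] at h6
  nlinarith [h6]

lemma volume_shift_le {d : ℕ} (x y : Euc (d + 1)) {r : ℝ} (hr : 0 < r) (hxy : dist x y ≤ r) :
    volume (ball x r \ ball y r) ≤
      ENNReal.ofReal (cShift d) * ENNReal.ofReal r ^ d * ENNReal.ofReal (dist x y) := by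
  rw [← ofReal_measureReal (measure_ne_top_of_subset sdiff_subset measure_ball_lt_top.ne),
    ← ENNReal.ofReal_pow hr.le, ← ENNReal.ofReal_mul (cShift_nonneg d),
    ← ENNReal.ofReal_mul (mul_nonneg (cShift_nonneg d) (by positivity))]
  exact ENNReal.ofReal_le_ofReal (volume_real_shift_le x y hr hxy)

/-- average density of `A` at scale `δ` -/
def avg {d : ℕ} (A : Set (Euc (d + 1))) (δ : ℝ) (x : Euc (d + 1)) : ℝ :=
  volume.real (A ∩ ball x δ) / volume.real (ball x δ)

lemma volume_real_ball_pos {d : ℕ} (x : Euc (d + 1)) {r : ℝ} (hr : 0 < r) :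
    0 < volume.real (ball x r) :=
  ENNReal.toReal_pos (measure_ball_pos volume x hr).ne' measure_ball_lt_top.ne

lemma avg_sub_le {d : ℕ} (A : Set (Euc (d + 1))) {δ : ℝ} (hδ : 0 < δ) {x y : Euc (d + 1)}
    (hxy : dist x y ≤ δ) : avg A δ x - avg A δ y ≤ (d + 1) * 2 ^ d / δ * dist x y := by
  have hω : 0 < volume.real (ball (0 : Euc (d + 1)) 1) := volume_real_ball_pos _ one_pos
  unfold avg
  rw [volume_real_ball_eq x hδ.le, volume_real_ball_eq y hδ.le, ← sub_div, div_le_iff₀ (by positivity)]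
  have h1 : volume.real (A ∩ ball x δ) ≤ volume.real (A ∩ ball y δ) + volume.real (ball x δ \ ball y δ) := by
    refine (measureReal_mono ?_ ?_).trans (measureReal_union_le _ _)
    · rintro z ⟨hz1, hz2⟩
      by_cases hz : z ∈ ball y δ
      · exact Or.inl ⟨hz1, hz⟩
      · exact Or.inr ⟨hz2, hz⟩
    · exact (measure_union_lt_top (measure_inter_lt_top_of_right_ne_top measure_ball_lt_top.ne)
        (measure_ne_top_of_subset sdiff_subset measure_ball_lt_top.ne).lt_top).ne
  have h2 := volume_real_shift_le x y hδ hxy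
  unfold cShift at h2
  have h3 : (d + 1 : ℝ) * 2 ^ d / δ * dist x y * (δ ^ (d + 1) * volume.real (ball (0 : Euc (d + 1)) 1))
    = volume.real (ball (0 : Euc (d + 1)) 1) * ((d + 1) * 2 ^ d) * δ ^ d * dist x y := by
    field_simp
    ring
  rw [h3]; linarith

lemma abs_avg_sub_le {d : ℕ} (A : Set (Euc (d + 1))) {δ : ℝ} (hδ : 0 < δ) {x y : Euc (d + 1)}
    (hxy : dist x y ≤ δ) : |avg A δ x - avg A δ y| ≤ (d + 1) * 2 ^ d / δ * dist x y := by
  rw [abs_le]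
  have h1 := avg_sub_le A hδ hxy
  have h2 := avg_sub_le A hδ (x := y) (y := x) (by rwa [dist_comm])
  rw [dist_comm y x] at h2
  constructor <;> linarith

lemma continuous_avg {d : ℕ} (A : Set (Euc (d + 1))) {δ : ℝ} (hδ : 0 < δ) :
    Continuous (avg A δ) := by
  rw [continuous_iff_continuousAt]
  intro y
  rw [ContinuousAt, tendsto_iff_dist_tendsto_zero]
  have h1 : Tendsto (fun x => (d + 1) * 2 ^ d / δ * dist x y) (𝓝 y) (𝓝 0) := by
    have : Continuous fun x => (d + 1) * 2 ^ d / δ * dist x y := by fun_prop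
    simpa using this.tendsto y
  refine squeeze_zero' (Eventually.of_forall fun _ => dist_nonneg) ?_ h1
  filter_upwards [closedBall_mem_nhds y hδ] with x hx
  exact abs_avg_sub_le A hδ hx

lemma avg_nonneg {d : ℕ} (A : Set (Euc (d + 1))) (δ : ℝ) (x : Euc (d + 1)) : 0 ≤ avg A δ x := by
  unfold avg; positivity

lemma volume_real_diff {d : ℕ} {A : Set (Euc (d + 1))} (hA : IsOpen A) (x : Euc (d + 1)) (δ : ℝ) :
    volume.real (ball x δ \ A) = volume.real (ball x δ) - volume.real (A ∩ ball x δ) := by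
  have := measureReal_sdiff_add_inter (μ := volume) (s := ball x δ) (t := A) hA.measurableSet
    (measure_ball_lt_top.ne)
  rw [inter_comm A]; linarith

lemma exists_KLr (d : ℕ) : ∃ C : ℝ≥0∞, C ≠ ⊤ ∧ ∀ {A : Set (Euc (d + 1))}, IsOpen A →
    volume A ≠ ⊤ → ∀ (c : Euc (d + 1)) {r : ℝ}, 0 < r →
    (2 ^ (d + 2))⁻¹ * volume.real (ball c r) ≤ volume.real (A ∩ ball c r) →
    (2 ^ (d + 2))⁻¹ * volume.real (ball c r) ≤ volume.real (ball c r \ A) →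
    ENNReal.ofReal r ^ d ≤ C * μH[(d : ℝ)] ((frontier A \ extMeas A) ∩ ball c r) := by
  obtain ⟨C, hC, h⟩ := exists_KL d
  refine ⟨C, hC, fun hA hAt c r hr h1 h2 => h hA hAt c hr ?_ ?_⟩
  · have := ENNReal.ofReal_le_ofReal h1
    rw [ENNReal.ofReal_mul (by positivity), ofReal_measureReal measure_ball_lt_top.ne,
      ofReal_measureReal (measure_inter_lt_top_of_right_ne_top measure_ball_lt_top.ne).ne,
      ENNReal.ofReal_inv_of_pos (by positivity), ENNReal.ofReal_pow (by norm_num)] at this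
    simpa using this
  · have := ENNReal.ofReal_le_ofReal h2
    rw [ENNReal.ofReal_mul (by positivity), ofReal_measureReal measure_ball_lt_top.ne,
      ofReal_measureReal (measure_ne_top_of_subset sdiff_subset measure_ball_lt_top.ne),
      ENNReal.ofReal_inv_of_pos (by positivity), ENNReal.ofReal_pow (by norm_num)] at this
    simpa using this

lemma mem_extMeas_of_notMem {m : ℕ} {A : Set (Euc m)} (hA : IsOpen A) {x : Euc m} (hx : x ∉ A)
    (hxK : x ∉ frontier A \ extMeas A) : x ∈ extMeas A := by
  by_cases hc : x ∈ closure A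
  · by_contra hcon
    exact hxK ⟨by rw [hA.frontier_eq]; exact ⟨hc, hx⟩, hcon⟩
  · have : (closure A)ᶜ ∈ 𝓝 x := isClosed_closure.isOpen_compl.mem_nhds hc
    obtain ⟨ε, hε, hsub⟩ := Metric.mem_nhds_iff.1 this
    refine tendsto_const_nhds.congr' ?_
    filter_upwards [Ioo_mem_nhdsGT hε] with r hr
    have : A ∩ closedBall x r = ∅ := by
      rw [eq_empty_iff_forall_notMem]
      rintro z ⟨h1, h2⟩
      exact hsub (closedBall_subset_ball hr.2 h2) (subset_closure h1)
    simp [this]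

/-- bad points outside `A` carry boundary at some scale. -/
lemma exists_scale {d : ℕ} {A : Set (Euc (d + 1))} (hA : IsOpen A) {x : Euc (d + 1)}
    (hx : x ∈ extMeas A) {δ : ℝ} (hδ : 0 < δ) (ha : 1 / 3 ≤ avg A δ x) :
    ∃ r, 0 < r ∧ r ≤ δ ∧
      (2 ^ (d + 2))⁻¹ * volume.real (ball x r) ≤ volume.real (A ∩ ball x r) ∧
      (2 ^ (d + 2))⁻¹ * volume.real (ball x r) ≤ volume.real (ball x r \ A) := by
  let ρ : ℕ → ℝ := fun n => δ * (1 / 2) ^ n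
  have hρ : ∀ n, 0 < ρ n := fun n => by positivity
  have hρ0 : Tendsto ρ atTop (𝓝 0) := by
    simpa [ρ] using (tendsto_pow_atTop_nhds_zero_of_lt_one (by norm_num : (0:ℝ) ≤ 1 / 2)
      (by norm_num)).const_mul δ
  have hex : ∃ n, avg A (ρ n) x < 1 / 3 := by
    obtain ⟨n, hn⟩ := (extMeas_eventually hx hρ hρ0 (c := ENNReal.ofReal (1 / 4)) (by simp)).exists
    refine ⟨n, ?_⟩
    unfold avg
    rw [div_lt_iff₀ (volume_real_ball_pos x (hρ n))]
    have h1 : volume (A ∩ ball x (ρ n)) ≤ ENNReal.ofReal (1 / 4) * volume (ball x (ρ n)) := by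
      rw [← Measure.addHaar_closedBall_eq_addHaar_ball]
      exact (measure_mono (inter_subset_inter_right _ ball_subset_closedBall)).trans hn
    have h2 := ENNReal.toReal_mono (by finiteness) h1
    rw [ENNReal.toReal_mul, ENNReal.toReal_ofReal (by norm_num)] at h2
    have h3 := volume_real_ball_pos x (hρ n)
    simp only [Measure.real] at h3 ⊢
    linarith
  classical
  have hf := Nat.find_spec hex
  have hmin : ∀ k < Nat.find hex, ¬ avg A (ρ k) x < 1 / 3 := fun k hk => Nat.find_min hex hk
  obtain ⟨n, hn⟩ : ∃ n, Nat.find hex = n + 1 := by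
    refine Nat.exists_eq_succ_of_ne_zero fun h0 => ?_
    rw [h0] at hf
    simp only [ρ, pow_zero, mul_one] at hf
    linarith
  rw [hn] at hf
  have hge := not_lt.1 (hmin n (by omega))
  have hp1 := volume_real_ball_pos x (hρ n)
  have hp2 := volume_real_ball_pos x (hρ (n + 1))
  unfold avg at hf hge
  rw [div_lt_iff₀ hp2] at hf
  rw [le_div_iff₀ hp1] at hge
  have hrel : volume.real (ball x (ρ (n + 1))) = (2 ^ (d + 1))⁻¹ * volume.real (ball x (ρ n)) := by
    rw [volume_real_ball_eq x (hρ _).le, volume_real_ball_eq x (hρ _).le]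
    have : ρ (n + 1) = 2⁻¹ * ρ n := by simp only [ρ]; ring
    rw [this, mul_pow, inv_pow]; ring
  have h2 : ((2:ℝ) ^ (d + 1))⁻¹ = 2 * (2 ^ (d + 2))⁻¹ := by
    rw [pow_succ 2 (d + 1)]; field_simp
  have h4 : ((2:ℝ) ^ (d + 2))⁻¹ ≤ 1 / 4 := by
    rw [inv_le_comm₀ (by positivity) (by norm_num)]
    have : (1:ℝ) ≤ 2 ^ d := one_le_pow₀ (by norm_num)
    rw [pow_add]; norm_num; linarith
  have hpos : (0:ℝ) < (2 ^ (d + 2))⁻¹ := by positivity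
  refine ⟨ρ n, hρ n, ?_, ?_, ?_⟩
  · have : ((1:ℝ) / 2) ^ n ≤ 1 := pow_le_one₀ (by norm_num) (by norm_num)
    simp only [ρ]; nlinarith
  · nlinarith
  · have h5 : volume.real (ball x (ρ (n + 1)) \ A) ≤ volume.real (ball x (ρ n) \ A) := by
      refine measureReal_mono (sdiff_subset_sdiff_left (ball_subset_ball ?_))
        (measure_ne_top_of_subset sdiff_subset measure_ball_lt_top.ne)
      have := hρ n
      have : ρ (n + 1) = 2⁻¹ * ρ n := by simp only [ρ]; ring
      linarith
    rw [volume_real_diff hA, hrel, h2] at h5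
    rw [hrel, h2] at hf
    have := mul_pos hpos hp1
    linarith

lemma exists_finite_cover {d : ℕ} {C : ℝ≥0∞} (hKL : ∀ {A : Set (Euc (d + 1))}, IsOpen A →
    volume A ≠ ⊤ → ∀ (c : Euc (d + 1)) {r : ℝ}, 0 < r →
    (2 ^ (d + 2))⁻¹ * volume.real (ball c r) ≤ volume.real (A ∩ ball c r) →
    (2 ^ (d + 2))⁻¹ * volume.real (ball c r) ≤ volume.real (ball c r \ A) →
    ENNReal.ofReal r ^ d ≤ C * μH[(d : ℝ)] ((frontier A \ extMeas A) ∩ ball c r))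
    {A : Set (Euc (d + 1))} (hA : IsOpen A) (hAt : volume A ≠ ⊤)
    (hK : μH[(d : ℝ)] (frontier A \ extMeas A) ≠ ⊤) {δ : ℝ} (hδ : 0 < δ)
    {E : Set (Euc (d + 1))} (hE : IsCompact E) (hEA : ∀ x ∈ E, x ∉ A ∧ 1 / 3 ≤ avg A δ x) :
    ∃ (ι : Type) (x : ι → Euc (d + 1)) (r : ι → ℝ) (t : Finset ι),
      (∀ i, 0 < r i ∧ r i ≤ 5 * δ) ∧ E ⊆ ⋃ i ∈ t, ball (x i) (r i) ∧
      ∑ i ∈ t, ENNReal.ofReal (r i) ^ d ≤ (μH[(d : ℝ)] (frontier A \ extMeas A) + 1) +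
        5 ^ d * (C * μH[(d : ℝ)] (frontier A \ extMeas A)) := by
  set K := frontier A \ extMeas A
  obtain ⟨ι, -, x, r, hr, hcov, hsum⟩ := exists_ball_cover (S := K) (c := μH[(d : ℝ)] K + 1)
    (ENNReal.lt_add_right hK one_ne_zero) hδ
  have hsc : ∀ z : Euc (d + 1), ∃ ρ : ℝ, z ∈ E \ K → (0 < ρ ∧ ρ ≤ δ) ∧
      ENNReal.ofReal ρ ^ d ≤ C * μH[(d : ℝ)] (K ∩ ball z ρ) := by
    intro z
    by_cases hz : z ∈ E \ K
    · have hze := mem_extMeas_of_notMem hA (hEA z hz.1).1 hz.2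
      obtain ⟨ρ, h1, h2, h3, h4⟩ := exists_scale hA hze hδ (hEA z hz.1).2
      exact ⟨ρ, fun _ => ⟨⟨h1, h2⟩, hKL hA hAt z h1 h3 h4⟩⟩
    · exact ⟨0, fun h => absurd h hz⟩
  choose ρ hρ using hsc
  obtain ⟨u, huI, huc, hucov, husum⟩ := vitali_cover (C := C) K (E \ K) ρ (δ := δ)
    (fun z hz => (hρ z hz).1) (fun z hz => (hρ z hz).2)
  let X : ι ⊕ u → Euc (d + 1) := Sum.elim x (fun z => z)
  let R : ι ⊕ u → ℝ := Sum.elim r (fun z => 5 * ρ z)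
  obtain ⟨t, ht⟩ := hE.elim_finite_subcover (fun i => ball (X i) (R i)) (fun i => isOpen_ball) (by
    intro z hz
    by_cases hzK : z ∈ K
    · obtain ⟨i, hi⟩ := mem_iUnion.1 (hcov hzK)
      exact mem_iUnion.2 ⟨Sum.inl i, hi⟩
    · obtain ⟨y, hy, hzy⟩ := mem_iUnion₂.1 (hucov ⟨hz, hzK⟩)
      exact mem_iUnion.2 ⟨Sum.inr ⟨y, hy⟩, hzy⟩)
  refine ⟨ι ⊕ u, X, R, t, ?_, ht, ?_⟩
  · rintro (i | z)
    · exact ⟨(hr i).1, (hr i).2.trans (by linarith)⟩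
    · have := (hρ z (huI z.2)).1
      exact ⟨by simp only [R, Sum.elim_inr]; linarith, by simp only [R, Sum.elim_inr]; linarith⟩
  · rw [Finset.sum_sum_eq_sum_toLeft_add_sum_toRight]
    refine add_le_add ((ENNReal.sum_le_tsum _).trans hsum) ?_
    refine (ENNReal.sum_le_tsum _).trans ?_
    refine le_trans ?_ (mul_le_mul_right husum (5 ^ d))
    rw [← ENNReal.tsum_mul_left]
    refine ENNReal.tsum_le_tsum fun z => ?_
    simp only [R, Sum.elim_inr]
    rw [ENNReal.ofReal_mul (by norm_num), mul_pow]
    simp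

lemma cut_step {d : ℕ} {v : Euc (d + 1) → ℝ} (hv0 : ∀ x, 0 ≤ v x) (hv1 : ∀ x, v x ≤ 1)
    (hv : Measurable v)
    (c : Euc (d + 1)) {r : ℝ} (hr : 0 < r) {h : Euc (d + 1)} (hh : ‖h‖ ≤ r) :
    ∫⁻ x, ‖(ball c r)ᶜ.indicator v (x + h) - (ball c r)ᶜ.indicator v x‖ₑ ≤
      (∫⁻ x, ‖v (x + h) - v x‖ₑ) + 2 * ENNReal.ofReal (cShift d) * ENNReal.ofReal r ^ d * ‖h‖ₑ := by
  set B := ball c r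
  let S1 := ball c r \ ball (c - h) r
  let S2 := ball (c - h) r \ ball c r
  have hS1 : MeasurableSet S1 := measurableSet_ball.diff measurableSet_ball
  have hS2 : MeasurableSet S2 := measurableSet_ball.diff measurableSet_ball
  have hsh : ∀ x, x + h ∈ B ↔ x ∈ ball (c - h) r := by
    intro x
    simp only [B, mem_ball, dist_eq_norm]
    rw [show x + h - c = x - (c - h) by abel]
  have hpt : ∀ x, ‖Bᶜ.indicator v (x + h) - Bᶜ.indicator v x‖ₑ ≤
      ‖v (x + h) - v x‖ₑ + (S1.indicator 1 x + S2.indicator 1 x) := by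
    intro x
    have hle : ∀ y, ‖v y‖ₑ ≤ 1 := by
      intro y
      rw [Real.enorm_eq_ofReal (hv0 y)]
      simpa using hv1 y
    by_cases hx : x ∈ B <;> by_cases hxh : x + h ∈ B
    · simp [hx, hxh]
    · have h1 : x ∈ S1 := ⟨hx, fun h => hxh ((hsh x).2 h)⟩
      rw [indicator_of_mem (show x + h ∈ Bᶜ from hxh), indicator_of_notMem (show x ∉ Bᶜ by simpa using hx),
        sub_zero, indicator_of_mem h1]
      exact (hle _).trans (le_add_left (by simp))
    · have h1 : x ∈ S2 := ⟨(hsh x).1 hxh, hx⟩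
      rw [indicator_of_mem (show x ∈ Bᶜ from hx), indicator_of_notMem (show x + h ∉ Bᶜ by simpa using hxh),
        zero_sub, enorm_neg, indicator_of_mem h1]
      exact (hle _).trans (le_add_left (by simp))
    · rw [indicator_of_mem (show x ∈ Bᶜ from hx), indicator_of_mem (show x + h ∈ Bᶜ from hxh)]
      exact le_self_add
  have hd : dist c (c - h) = ‖h‖ := by rw [dist_eq_norm]; simp
  have e1 : volume S1 ≤ ENNReal.ofReal (cShift d) * ENNReal.ofReal r ^ d * ‖h‖ₑ := by
    have := volume_shift_le c (c - h) hr (by rw [hd]; exact hh)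
    rwa [hd, ofReal_norm] at this
  have e2 : volume S2 ≤ ENNReal.ofReal (cShift d) * ENNReal.ofReal r ^ d * ‖h‖ₑ := by
    have := volume_shift_le (c - h) c hr (by rw [dist_comm, hd]; exact hh)
    rwa [dist_comm, hd, ofReal_norm] at this
  refine (lintegral_mono hpt).trans ?_
  rw [lintegral_add_left (by fun_prop), lintegral_add_left (measurable_one.indicator hS1),
    lintegral_indicator_one hS1, lintegral_indicator_one hS2]
  gcongr
  refine (add_le_add e1 e2).trans (le_of_eq (by ring))

lemma cut_finset {d : ℕ} {v : Euc (d + 1) → ℝ} (hv0 : ∀ x, 0 ≤ v x) (hv1 : ∀ x, v x ≤ 1)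
    (hv : Measurable v) {ι : Type} (c : ι → Euc (d + 1)) (r : ι → ℝ) (hr : ∀ i, 0 < r i)
    (t : Finset ι) : ∃ w : Euc (d + 1) → ℝ, Measurable w ∧ (∀ x, 0 ≤ w x) ∧ (∀ x, w x ≤ 1) ∧
      (∀ x, w x ≠ 0 → v x ≠ 0 ∧ x ∉ ⋃ i ∈ t, ball (c i) (r i)) ∧
      (∀ x, x ∉ (⋃ i ∈ t, ball (c i) (r i)) → w x = v x) ∧
      ∃ h0 > 0, ∀ h : Euc (d + 1), ‖h‖ < h0 → ∫⁻ x, ‖w (x + h) - w x‖ₑ ≤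
        (∫⁻ x, ‖v (x + h) - v x‖ₑ) +
          2 * ENNReal.ofReal (cShift d) * (∑ i ∈ t, ENNReal.ofReal (r i) ^ d) * ‖h‖ₑ := by
  classical
  induction t using Finset.induction_on with
  | empty => exact ⟨v, hv, hv0, hv1, by simp, by simp, 1, one_pos, by simp⟩
  | insert a t hat ih =>
    obtain ⟨w, hw, hw0, hw1, hws, hwe, h0, hh0, hb⟩ := ih
    refine ⟨(ball (c a) (r a))ᶜ.indicator w, hw.indicator measurableSet_ball.compl,
      fun x => indicator_nonneg (fun y _ => hw0 y) x,
      fun x => (indicator_le_self' (fun y _ => hw0 y) x).trans (hw1 x), ?_, ?_,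
      min h0 (r a), lt_min hh0 (hr a), ?_⟩
    · intro x hx
      have h1 : x ∈ (ball (c a) (r a))ᶜ := mem_of_indicator_ne_zero hx
      rw [indicator_of_mem h1] at hx
      obtain ⟨h2, h3⟩ := hws x hx
      refine ⟨h2, ?_⟩
      rw [Finset.set_biUnion_insert]
      exact fun h => h.elim h1 h3
    · intro x hx
      rw [Finset.set_biUnion_insert] at hx
      have h1 : x ∈ (ball (c a) (r a))ᶜ := fun h => hx (Or.inl h)
      rw [indicator_of_mem h1]
      exact hwe x fun h => hx (Or.inr h)
    · intro h hh
      refine (cut_step hw0 hw1 hw (c a) (hr a) (hh.le.trans (min_le_right _ _))).trans ?_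
      refine (add_le_add_left (hb h (hh.trans_le (min_le_left _ _))) _).trans ?_
      rw [Finset.sum_insert hat]
      exact le_of_eq (by ring)

/-- truncated density -/
def gfun {d : ℕ} (A : Set (Euc (d + 1))) (δ : ℝ) (x : Euc (d + 1)) : ℝ :=
  max 0 (min 1 (3 * avg A δ x - 1))

lemma gfun_translation {d : ℕ} {C : ℝ≥0∞} (hKL : ∀ {A : Set (Euc (d + 1))}, IsOpen A →
    volume A ≠ ⊤ → ∀ (c : Euc (d + 1)) {r : ℝ}, 0 < r →
    (2 ^ (d + 2))⁻¹ * volume.real (ball c r) ≤ volume.real (A ∩ ball c r) →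
    (2 ^ (d + 2))⁻¹ * volume.real (ball c r) ≤ volume.real (ball c r \ A) →
    ENNReal.ofReal r ^ d ≤ C * μH[(d : ℝ)] ((frontier A \ extMeas A) ∩ ball c r))
    {A : Set (Euc (d + 1))} (hA : IsOpen A) (hAt : volume A ≠ ⊤) {δ : ℝ} (hδ : 0 < δ) :
    ∃ h0 > 0, ∀ h : Euc (d + 1), ‖h‖ < h0 → ∫⁻ x, ‖gfun A δ (x + h) - gfun A δ x‖ₑ ≤
      ENNReal.ofReal (3 * ((d + 1) * 2 ^ d)) * (5 ^ (d + 1) * volume (ball (0 : Euc (d + 1)) 1) *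
        (C * μH[(d : ℝ)] (frontier A \ extMeas A))) * ‖h‖ₑ := by
  set K := frontier A \ extMeas A
  set L : ℝ := (d + 1) * 2 ^ d with hL
  have hLpos : 0 < L := by positivity
  have h4 : ((2:ℝ) ^ (d + 2))⁻¹ ≤ 1 / 4 := by
    rw [inv_le_comm₀ (by positivity) (by norm_num)]
    have : (1:ℝ) ≤ 2 ^ d := one_le_pow₀ (by norm_num)
    rw [pow_add]; norm_num; linarith
  let I : Set (Euc (d + 1)) := {x | 1 / 4 ≤ avg A δ x ∧ avg A δ x ≤ 3 / 4}
  have hIm : MeasurableSet I :=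
    (measurableSet_le measurable_const (continuous_avg A hδ).measurable).inter
      (measurableSet_le (continuous_avg A hδ).measurable measurable_const)
  obtain ⟨u, huI, huc, hucov, husum⟩ := vitali_cover (C := C) K I (fun _ => δ) (δ := δ)
    (fun z hz => ⟨hδ, le_rfl⟩) (fun x hx => by
      have hp := volume_real_ball_pos x hδ
      have h1 := hx.1
      have h2 := hx.2
      unfold avg at h1 h2
      rw [le_div_iff₀ hp] at h1
      rw [div_le_iff₀ hp] at h2
      refine hKL hA hAt x hδ ?_ ?_
      · nlinarith
      · rw [volume_real_diff hA]; nlinarith)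
  have hvolI : volume I ≤ ENNReal.ofReal δ * (5 ^ (d + 1) * volume (ball (0 : Euc (d + 1)) 1) *
        (C * μH[(d : ℝ)] K)) := by
    calc volume I ≤ ∑' x : u, volume (ball (x : Euc (d + 1)) (5 * δ)) :=
          (measure_mono hucov).trans (measure_biUnion_le volume huc _)
      _ = ∑' x : u, (ENNReal.ofReal δ * 5 ^ (d + 1) * volume (ball (0 : Euc (d + 1)) 1)) *
            ENNReal.ofReal δ ^ d := by
          refine tsum_congr fun x => ?_
          rw [volume_ball_eq _ (by positivity), ENNReal.ofReal_mul (by norm_num)]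
          rw [show ENNReal.ofReal 5 = 5 by simp]
          ring
      _ = (ENNReal.ofReal δ * 5 ^ (d + 1) * volume (ball (0 : Euc (d + 1)) 1)) *
            ∑' x : u, ENNReal.ofReal δ ^ d := by rw [ENNReal.tsum_mul_left]
      _ ≤ (ENNReal.ofReal δ * 5 ^ (d + 1) * volume (ball (0 : Euc (d + 1)) 1)) *
            (C * μH[(d : ℝ)] K) := by gcongr
      _ = _ := by ring
  refine ⟨min δ (δ / (12 * L)), by positivity, fun h hh => ?_⟩
  have hhδ : ‖h‖ ≤ δ := hh.le.trans (min_le_left _ _)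
  have hh2 : L / δ * ‖h‖ ≤ 1 / 12 := by
    have h1 := hh.le.trans (min_le_right _ _)
    rw [le_div_iff₀ (by positivity)] at h1
    rw [div_mul_eq_mul_div, div_le_iff₀ hδ]
    linarith
  have hpt : ∀ x, ‖gfun A δ (x + h) - gfun A δ x‖ₑ ≤
      I.indicator (fun _ => ENNReal.ofReal (3 * L / δ * ‖h‖)) x := by
    intro x
    have hl := abs_avg_sub_le A hδ (x := x + h) (y := x) (by simpa [dist_eq_norm] using hhδ)
    rw [show dist (x + h) x = ‖h‖ by simp [dist_eq_norm], ← hL] at hl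
    obtain ⟨hl1, hl2⟩ := abs_le.1 hl
    by_cases hx : x ∈ I
    · rw [indicator_of_mem hx, ← ofReal_norm, Real.norm_eq_abs]
      refine ENNReal.ofReal_le_ofReal ?_
      unfold gfun
      rw [show 3 * L / δ * ‖h‖ = 3 * (L / δ * ‖h‖) by ring]
      set q := L / δ * ‖h‖
      rw [abs_le]
      constructor <;> rcases max_cases 0 (min 1 (3 * avg A δ (x + h) - 1)) with ⟨e1, _⟩ | ⟨e1, _⟩ <;>
        rcases max_cases 0 (min 1 (3 * avg A δ x - 1)) with ⟨e2, _⟩ | ⟨e2, _⟩ <;>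
        rcases min_cases 1 (3 * avg A δ (x + h) - 1) with ⟨e3, _⟩ | ⟨e3, _⟩ <;>
        rcases min_cases 1 (3 * avg A δ x - 1) with ⟨e4, _⟩ | ⟨e4, _⟩ <;> linarith
    · rw [indicator_of_notMem hx]
      have hx' : avg A δ x < 1 / 4 ∨ 3 / 4 < avg A δ x := by
        by_contra hcon
        push Not at hcon
        exact hx hcon
      have : gfun A δ (x + h) = gfun A δ x := by
        unfold gfun
        rcases hx' with h5 | h5
        · rw [max_eq_left, max_eq_left]
          · exact (min_le_right _ _).trans (by linarith)
          · exact (min_le_right _ _).trans (by linarith)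
        · rw [min_eq_left (by linarith), min_eq_left (by linarith)]
      simp [this]
  refine (lintegral_mono hpt).trans ?_
  rw [lintegral_indicator hIm, setLIntegral_const]
  refine (mul_le_mul_right hvolI _).trans (le_of_eq ?_)
  rw [ENNReal.ofReal_mul (by positivity), ofReal_norm, ENNReal.ofReal_div_of_pos hδ]
  have hδ0 : ENNReal.ofReal δ ≠ 0 := by simpa using hδ
  set Q := 5 ^ (d + 1) * volume (ball (0 : Euc (d + 1)) 1) * (C * μH[(d : ℝ)] K)
  calc ENNReal.ofReal (3 * L) / ENNReal.ofReal δ * ‖h‖ₑ * (ENNReal.ofReal δ * Q)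
      = (ENNReal.ofReal (3 * L) / ENNReal.ofReal δ * ENNReal.ofReal δ) * Q * ‖h‖ₑ := by ring
    _ = _ := by rw [ENNReal.div_mul_cancel hδ0 ENNReal.ofReal_ne_top]

lemma gfun_mem {d : ℕ} (A : Set (Euc (d + 1))) (δ : ℝ) (x : Euc (d + 1)) :
    0 ≤ gfun A δ x ∧ gfun A δ x ≤ 1 :=
  ⟨le_max_left _ _, max_le zero_le_one (min_le_left _ _)⟩

lemma isCompact_superlevel {d : ℕ} {A : Set (Euc (d + 1))} (hA : IsOpen A) (hAt : volume A ≠ ⊤)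
    {δ : ℝ} (hδ : 0 < δ) : IsCompact {x | 1 / 3 ≤ avg A δ x} := by
  have hcl : IsClosed {x | 1 / 3 ≤ avg A δ x} :=
    isClosed_le continuous_const (continuous_avg A hδ)
  refine isCompact_of_isClosed_isBounded hcl ?_
  have hlim : Tendsto (fun n : ℕ => volume (A \ ball 0 (n : ℝ))) atTop (𝓝 0) := by
    have h1 := tendsto_measure_iInter_atTop (μ := volume)
      (s := fun n : ℕ => A \ ball (0 : Euc (d + 1)) (n : ℝ))
      (fun n => (hA.measurableSet.diff measurableSet_ball).nullMeasurableSet)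
      (fun n k hnk => sdiff_subset_sdiff_right (ball_subset_ball (by exact_mod_cast hnk)))
      ⟨0, measure_ne_top_of_subset sdiff_subset hAt⟩
    have h2 : ⋂ n : ℕ, A \ ball (0 : Euc (d + 1)) (n : ℝ) = ∅ := by
      rw [eq_empty_iff_forall_notMem]
      intro x hx
      obtain ⟨n, hn⟩ := exists_nat_gt ‖x‖
      exact (mem_iInter.1 hx n).2 (by simpa using hn)
    rwa [h2, measure_empty] at h1
  have hω : 0 < volume.real (ball (0 : Euc (d + 1)) δ) := volume_real_ball_pos _ hδ
  obtain ⟨n, hn⟩ := (hlim.eventually (gt_mem_nhds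
    (show (0 : ℝ≥0∞) < ENNReal.ofReal (1 / 3 * volume.real (ball (0 : Euc (d + 1)) δ)) by
      rw [ENNReal.ofReal_pos]; positivity))).exists
  refine (isBounded_ball (x := (0 : Euc (d + 1))) (r := n + δ)).subset fun x hx => ?_
  by_contra hcon
  rw [mem_ball_zero_iff, not_lt] at hcon
  have hsub : A ∩ ball x δ ⊆ A \ ball 0 (n : ℝ) := by
    rintro z ⟨h1, h2⟩
    refine ⟨h1, fun h3 => ?_⟩
    rw [mem_ball_zero_iff] at h3
    rw [mem_ball, dist_comm, dist_eq_norm] at h2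
    have := norm_sub_norm_le x z
    linarith
  have h1 : volume.real (A ∩ ball x δ) < 1 / 3 * volume.real (ball (0 : Euc (d + 1)) δ) := by
    rw [Measure.real]
    exact (ENNReal.lt_ofReal_iff_toReal_lt (measure_ne_top_of_subset inter_subset_left hAt)).1
      ((measure_mono hsub).trans_lt hn)
  have h2 : (1 : ℝ) / 3 ≤ avg A δ x := hx
  unfold avg at h2
  rw [le_div_iff₀ (volume_real_ball_pos x hδ), volume_real_ball_eq x hδ.le] at h2
  rw [volume_real_ball_eq 0 hδ.le] at h1
  linarith

lemma exists_v {d : ℕ} {A : Set (Euc (d + 1))} (hA : IsOpen A) (hAt : volume A ≠ ⊤)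
    (hK : μH[(d : ℝ)] (frontier A \ extMeas A) ≠ ⊤) :
    ∃ C : ℝ≥0∞, C ≠ ⊤ ∧ ∀ ε : ℝ≥0∞, 0 < ε → ∃ (v : Euc (d + 1) → ℝ) (S : Set (Euc (d + 1))) (h0 : ℝ),
      Measurable v ∧ (∀ x, 0 ≤ v x) ∧ (∀ x, v x ≤ 1) ∧ IsCompact S ∧ S ⊆ A ∧
      (∀ x, v x ≠ 0 → x ∈ S) ∧ 0 < h0 ∧
      (∀ h : Euc (d + 1), ‖h‖ < h0 → ∫⁻ x, ‖v (x + h) - v x‖ₑ ≤ C * ‖h‖ₑ) ∧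
      volume {x | x ∈ A ∧ v x < 1} ≤ ε := by
  obtain ⟨C4, hC4, hKL⟩ := exists_KLr d
  set k := μH[(d : ℝ)] (frontier A \ extMeas A) with hk
  set ω := volume (ball (0 : Euc (d + 1)) 1)
  have hωt : ω ≠ ⊤ := measure_ball_lt_top.ne
  let C1 : ℝ≥0∞ := ENNReal.ofReal (3 * ((d + 1) * 2 ^ d)) * (5 ^ (d + 1) * ω * (C4 * k))
  let T : ℝ≥0∞ := (k + 1) + 5 ^ d * (C4 * k)
  have hC1 : C1 ≠ ⊤ := by simp only [C1]; finiteness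
  have hT : T ≠ ⊤ := by simp only [T]; finiteness
  refine ⟨C1 + 2 * ENNReal.ofReal (cShift d) * T, by finiteness, fun ε hε => ?_⟩
  -- choose the scale
  have hε2 : 0 < ε / 2 := ENNReal.half_pos hε.ne'
  have hlim1 : Tendsto (fun δ : ℝ => (volume.restrict A) (thickening δ Aᶜ)) (𝓝[>] 0) (𝓝 0) := by
    have : IsFiniteMeasure (volume.restrict A) := ⟨by simpa using hAt.lt_top⟩
    have h1 := tendsto_measure_thickening (μ := volume.restrict A) (s := Aᶜ)
      ⟨1, one_pos, measure_ne_top _ _⟩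
    rwa [hA.isClosed_compl.closure_eq, Measure.restrict_apply hA.measurableSet.compl,
      compl_inter_self, measure_empty] at h1
  have hlim2 : Tendsto (fun δ : ℝ => ENNReal.ofReal (5 * δ) * (ω * T)) (𝓝[>] 0) (𝓝 0) := by
    have h1 : Tendsto (fun δ : ℝ => ENNReal.ofReal (5 * δ)) (𝓝 0) (𝓝 0) := by
      have : Continuous fun δ : ℝ => ENNReal.ofReal (5 * δ) :=
        ENNReal.continuous_ofReal.comp (continuous_const_mul 5)
      simpa using this.tendsto 0
    have h2 := ENNReal.Tendsto.mul_const (b := ω * T) h1 (Or.inr (by finiteness))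
    rw [zero_mul] at h2
    exact h2.mono_left nhdsWithin_le_nhds
  obtain ⟨δ, ⟨h1, h2⟩, hδ⟩ := ((((hlim1.eventually (gt_mem_nhds hε2)).and
    (hlim2.eventually (gt_mem_nhds hε2))).and self_mem_nhdsWithin).exists)
  replace hδ : 0 < δ := hδ
  let F : Set (Euc (d + 1)) := {x | 1 / 3 ≤ avg A δ x}
  have hF : IsCompact F := isCompact_superlevel hA hAt hδ
  obtain ⟨ι, c, r, t, hr, hcov, hsum⟩ := exists_finite_cover hKL hA hAt hK hδ
    (E := F \ A) (hF.diff hA) (fun x hx => ⟨hx.2, hx.1⟩)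
  have hgm : Measurable (gfun A δ) :=
    measurable_const.max (measurable_const.min
      (((continuous_avg A hδ).measurable.const_mul 3).sub_const 1))
  obtain ⟨w, hw, hw0, hw1, hws, hwe, h0, hh0, hb⟩ := cut_finset (fun x => (gfun_mem A δ x).1)
    (fun x => (gfun_mem A δ x).2) hgm c r (fun i => (hr i).1) t
  obtain ⟨h0', hh0', hg⟩ := gfun_translation hKL hA hAt hδ
  refine ⟨w, F \ ⋃ i ∈ t, ball (c i) (r i), min h0 h0', hw, hw0, hw1,
    hF.diff (isOpen_biUnion fun i _ => isOpen_ball), ?_, ?_, lt_min hh0 hh0', ?_, ?_⟩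
  · rintro x ⟨hx, hx'⟩
    by_contra hxA
    exact hx' (hcov ⟨hx, hxA⟩)
  · intro x hx
    obtain ⟨h3, h4⟩ := hws x hx
    refine ⟨?_, h4⟩
    by_contra hcon
    have hlt : avg A δ x < 1 / 3 := not_le.1 hcon
    apply h3
    unfold gfun
    exact max_eq_left ((min_le_right _ _).trans (by linarith))
  · intro h hh
    refine (hb h (hh.trans_le (min_le_left _ _))).trans ?_
    refine (add_le_add (hg h (hh.trans_le (min_le_right _ _))) ?_).trans
      (le_of_eq (add_mul C1 (2 * ENNReal.ofReal (cShift d) * T) ‖h‖ₑ).symm)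
    gcongr
  · have hsub : {x | x ∈ A ∧ w x < 1} ⊆ (thickening δ Aᶜ ∩ A) ∪ ⋃ i ∈ t, ball (c i) (r i) := by
      rintro x ⟨hxA, hx⟩
      by_cases hxt : x ∈ ⋃ i ∈ t, ball (c i) (r i)
      · exact Or.inr hxt
      · refine Or.inl ⟨?_, hxA⟩
        by_contra hcon
        have hbA : ball x δ ⊆ A := by
          intro z hz
          by_contra hzA
          exact hcon (mem_thickening_iff.2 ⟨z, hzA, by rw [dist_comm]; exact hz⟩)
        have ha : avg A δ x = 1 := by
          unfold avg
          rw [inter_eq_self_of_subset_right hbA, div_self (volume_real_ball_pos x hδ).ne']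
        rw [hwe x hxt] at hx
        unfold gfun at hx
        rw [ha] at hx
        norm_num at hx
    refine (measure_mono hsub).trans ((measure_union_le _ _).trans ?_)
    rw [← ENNReal.add_halves ε]
    refine add_le_add ?_ ?_
    · rw [← Measure.restrict_apply isOpen_thickening.measurableSet]
      exact h1.le
    · refine le_trans ?_ h2.le
      refine (measure_biUnion_finset_le _ _).trans ?_
      calc ∑ i ∈ t, volume (ball (c i) (r i))
          ≤ ∑ i ∈ t, ENNReal.ofReal (5 * δ) * ω * ENNReal.ofReal (r i) ^ d := by
            refine Finset.sum_le_sum fun i _ => ?_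
            rw [volume_ball_eq _ (hr i).1.le, pow_succ]
            calc ENNReal.ofReal (r i) ^ d * ENNReal.ofReal (r i) * ω
                ≤ ENNReal.ofReal (r i) ^ d * ENNReal.ofReal (5 * δ) * ω := by
                  gcongr; exact (hr i).2
              _ = _ := by ring
        _ = ENNReal.ofReal (5 * δ) * ω * ∑ i ∈ t, ENNReal.ofReal (r i) ^ d := by
            rw [Finset.mul_sum]
        _ ≤ ENNReal.ofReal (5 * δ) * ω * T := by gcongr
        _ = _ := by ring

lemma exists_V {d : ℕ} {A : Set (Euc (d + 1))} (hA : IsOpen A) (hAt : volume A ≠ ⊤)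
    (hK : μH[(d : ℝ)] (frontier A \ extMeas A) ≠ ⊤) :
    ∃ P : ℝ≥0∞, P ≠ ⊤ ∧ ∀ ε : ℝ≥0∞, 0 < ε → ∃ V : Set (Euc (d + 1)),
      IsSmoothSet V ∧ closure V ⊆ A ∧ IsCompact (closure V) ∧ perimeter V univ ≤ P ∧
      volume (A \ V) ≤ ε := by
  obtain ⟨C, hC, hv⟩ := exists_v hA hAt hK
  refine ⟨3 * (((d + 1 : ℕ) : ℝ≥0∞) * (C + 1)) + 1, by finiteness, fun ε hε => ?_⟩
  have hε2 : 0 < ε / 2 := ENNReal.half_pos hε.ne'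
  have hε12 : 0 < ε / 2 / 6 := ENNReal.div_pos hε2.ne' (by norm_num)
  obtain ⟨v, S, h0, hvm, hv0, hv1, hS, hSA, hvS, hh0, hT, hvol⟩ := hv (ε / 2) hε2
  obtain ⟨u, hu, hcs, hts, huT, hui⟩ := exists_mollify hvm hv0 hv1 hS hA hSA hvS hC hh0 hT hε12
  obtain ⟨V, hV1, hV2, hV3, hV4, hV5⟩ := exists_level hu hcs hC hh0 huT
  refine ⟨V, hV1, hV2.trans hts, hV3, hV4, ?_⟩
  have hsub : A \ V ⊆ {x | x ∈ A ∧ v x < 1} ∪ {x | (1 / 6 : ℝ≥0∞) ≤ ‖u x - v x‖ₑ} := by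
    rintro x ⟨hxA, hxV⟩
    by_cases hx : v x < 1
    · exact Or.inl ⟨hxA, hx⟩
    · right
      have h1 : v x = 1 := le_antisymm (hv1 x) (not_lt.1 hx)
      have h2 : u x ≤ 5 / 6 := not_lt.1 fun h => hxV (hV5 h)
      rw [mem_ofPred_eq, h1, ← ofReal_norm, Real.norm_eq_abs]
      have h3 : (1 / 6 : ℝ) ≤ |u x - 1| := by rw [abs_of_nonpos (by linarith)]; linarith
      refine le_trans (le_of_eq ?_) (ENNReal.ofReal_le_ofReal h3)
      rw [ENNReal.ofReal_div_of_pos (by norm_num)]; simp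
  refine (measure_mono hsub).trans ((measure_union_le _ _).trans ?_)
  rw [← ENNReal.add_halves ε]
  refine add_le_add hvol ?_
  have hm : Measurable fun x => ‖u x - v x‖ₑ := (hu.continuous.measurable.sub hvm).enorm
  have hme := mul_meas_ge_le_lintegral (μ := volume) hm (1 / 6)
  have h6 := hme.trans hui
  rw [one_div, div_eq_mul_inv (ε / 2), mul_comm] at h6
  rw [one_div]
  exact (ENNReal.mul_le_mul_iff_left (c := 6⁻¹) (by simp) (by simp)).1 h6

lemma main_pos {d : ℕ} (A : Set (Euc (d + 1))) (h1 : volume A < ⊤)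
    (hH : (μH[(d : ℝ)] : Measure (Euc (d + 1))) (frontier A \ extMeas A) < ⊤) :
    ∃ V : ℕ → Set (Euc (d + 1)),
      (∀ n, IsSmoothSet (V n) ∧ closure (V n) ⊆ A ∧ IsCompact (closure (V n))) ∧
      (⨆ n, perimeter (V n) Set.univ) < ⊤ ∧
      Tendsto (fun n => volume ((V n) ∆ A)) atTop (𝓝 0) := by
  have hext : volume (A ∩ extMeas A) = 0 := by
    have h2 := Besicovitch.ae_tendsto_measure_inter_div (volume : Measure (Euc (d + 1))) A
    have h3 := Measure.le_restrict_apply (μ := (volume : Measure (Euc (d + 1)))) A (extMeas A)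
    rw [inter_comm]
    refine le_antisymm (h3.trans (le_of_eq ?_)) zero_le
    refine measure_mono_null (fun x hx => ?_) h2
    intro hcon
    have := tendsto_nhds_unique (show Tendsto _ _ _ from hcon) (show Tendsto _ _ _ from hx)
    exact one_ne_zero this
  have hnull : volume (A \ interior A) = 0 := by
    refine measure_mono_null (t := (frontier A \ extMeas A) ∪ (A ∩ extMeas A)) ?_
      (measure_union_null (volume_zero_of_hausdorff hH.ne) hext)
    rintro x ⟨hx, hxi⟩
    by_cases he : x ∈ extMeas A
    · exact Or.inr ⟨hx, he⟩
    · exact Or.inl ⟨⟨subset_closure hx, hxi⟩, he⟩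
  have hfr : frontier (interior A) ⊆ frontier A := by
    rw [isOpen_interior.frontier_eq]
    exact fun x hx => ⟨closure_mono interior_subset hx.1, hx.2⟩
  have hexteq : extMeas (interior A) = extMeas A := by
    unfold extMeas
    have : ∀ (x : Euc (d + 1)) (r : ℝ), volume (interior A ∩ closedBall x r) =
        volume (A ∩ closedBall x r) := by
      intro x r
      refine le_antisymm (measure_mono (inter_subset_inter_left _ interior_subset)) ?_
      refine (measure_mono (t := (interior A ∩ closedBall x r) ∪ (A \ interior A)) ?_).trans
        ((measure_union_le _ _).trans (by rw [hnull, add_zero]))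
      rintro z ⟨hz1, hz2⟩
      by_cases hz : z ∈ interior A
      · exact Or.inl ⟨hz, hz2⟩
      · exact Or.inr ⟨hz1, hz⟩
    simp only [this]
  obtain ⟨P, hP, hV⟩ := exists_V (A := interior A) isOpen_interior
    (measure_ne_top_of_subset interior_subset h1.ne) (by
      rw [hexteq]
      exact measure_ne_top_of_subset (sdiff_subset_sdiff_left hfr) hH.ne)
  have hex : ∀ n : ℕ, ∃ V : Set (Euc (d + 1)),
      IsSmoothSet V ∧ closure V ⊆ interior A ∧ IsCompact (closure V) ∧ perimeter V univ ≤ P ∧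
      volume (interior A \ V) ≤ ((n : ℝ≥0∞) + 1)⁻¹ := fun n => hV _ (by
        rw [ENNReal.inv_pos]; finiteness)
  choose V hV1 hV2 hV3 hV4 hV5 using hex
  refine ⟨V, fun n => ⟨hV1 n, (hV2 n).trans interior_subset, hV3 n⟩,
    (iSup_le hV4).trans_lt hP.lt_top, ?_⟩
  have hlim : Tendsto (fun n : ℕ => ((n : ℝ≥0∞) + 1)⁻¹) atTop (𝓝 0) := by
    have := (tendsto_add_atTop_iff_nat 1).2 ENNReal.tendsto_inv_nat_nhds_zero
    simpa using this
  refine tendsto_of_tendsto_of_tendsto_of_le_of_le tendsto_const_nhds hlim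
    (fun _ => zero_le) fun n => ?_
  have hVA : V n ⊆ A := subset_closure.trans ((hV2 n).trans interior_subset)
  refine (measure_mono (t := (interior A \ V n) ∪ (A \ interior A)) ?_).trans
    ((measure_union_le _ _).trans (by rw [hnull, add_zero]; exact hV5 n))
  rintro x (⟨hx1, hx2⟩ | ⟨hx1, hx2⟩)
  · exact absurd (hVA hx1) hx2
  · by_cases hx : x ∈ interior A
    · exact Or.inl ⟨hx, hx2⟩
    · exact Or.inr ⟨hx1, hx⟩

lemma main_zero (A : Set (Euc 0)) (h0 : 0 < volume A) :
    ∃ V : ℕ → Set (Euc 0),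
      (∀ n, IsSmoothSet (V n) ∧ closure (V n) ⊆ A ∧ IsCompact (closure (V n))) ∧
      (⨆ n, perimeter (V n) Set.univ) < ⊤ ∧
      Tendsto (fun n => volume ((V n) ∆ A)) atTop (𝓝 0) := by
  have hne : A.Nonempty := nonempty_of_measure_ne_zero h0.ne'
  have hA : A = univ := Subsingleton.eq_univ_of_nonempty hne
  subst hA
  refine ⟨fun _ => univ, fun _ => ⟨⟨isOpen_univ, ?_, by simp⟩, by simp, ?_⟩, ?_, by simp⟩
  · exact (Set.toFinite _).isBounded
  · exact (Set.toFinite _).isCompact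
  · simp [perimeter, pdiv]

/-- **Proposition 4.3, second part**: if the non-exterior boundary of a set `A` of finite
positive Lebesgue measure has finite `(m-1)`-dimensional Hausdorff measure, then `A` is
approximated in `L_1(ℝ^m)` by a *sequence* of smooth sets compactly contained in `A` with
uniformly bounded perimeter. -/
theorem approximation_of_finite_nonexterior_boundary {m : ℕ} (A : Set (Euc m))
    (h0 : 0 < volume A) (h1 : volume A < ⊤)
    (hH : (μH[(m : ℝ) - 1] : Measure (Euc m)) (frontier A \ extMeas A) < ⊤) :
    ∃ V : ℕ → Set (Euc m),
      (∀ n, IsSmoothSet (V n) ∧ closure (V n) ⊆ A ∧ IsCompact (closure (V n))) ∧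
      (⨆ n, perimeter (V n) Set.univ) < ⊤ ∧
      Tendsto (fun n => volume ((V n) ∆ A)) atTop (𝓝 0) := by
  cases m with
  | zero => exact main_zero A h0
  | succ d =>
    have hd : ((d + 1 : ℕ) : ℝ) - 1 = (d : ℝ) := by push_cast; ring
    rw [hd] at hH
    exact main_pos A h1 hH

end
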